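/- arXiv:1108.0351 — 9 statements merged into one kernel-verified Lean document; each statement's English description precedes it below -/
import Mathlib

section
/- Let 𝒞 be a category, ⊗ : 𝒞 × 𝒞 → 𝒞 a functor, and α a natural isomorphism with components α_{A,B,C} : (A ⊗ B) ⊗ C ≅ A ⊗ (B ⊗ C) satisfying the pentagon identity. Let P be an object of 𝒞, θ : P ⊗ P ≅ P an isomorphism, and let C : P → P be the unique morphism satisfying C ∘ θ ∘ (θ ⊗ id_P) = θ ∘ (id_P ⊗ θ) ∘ α_{P,P,P}. If moreover θ ∘ (C ⊗ id_P) = C ∘ θ and θ ∘ (id_P ⊗ C) = C ∘ θ, then C = id_P. (In particular this holds in any monoidal category with its tensor product and associator.) -/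
/-!
STATEMENT 0: The idempotent theorem. Let `𝒞` be a category, `⊗ : 𝒞 × 𝒞 ⥤ 𝒞` a functor
("operation"), `α` a natural isomorphism `(A ⊗ B) ⊗ C ≅ A ⊗ (B ⊗ C)` satisfying the
pentagon identity, `(P, θ)` an idempotent, and `C : P ⟶ P` the morphism defined by the
commutative diagram `C ∘ θ ∘ (θ ⊗ id) = θ ∘ (id ⊗ θ) ∘ α`.  If `θ ∘ (C ⊗ id) = C ∘ θ`
and `θ ∘ (id ⊗ C) = C ∘ θ`, then `C = id`.
-/

open CategoryTheory

universe v u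

theorem idem_aux {𝒞 : Type u} [Category.{v} 𝒞] (O : 𝒞 → 𝒞 → 𝒞)
    (T : ∀ {A B A' B' : 𝒞}, (A ⟶ A') → (B ⟶ B') → (O A B ⟶ O A' B'))
    (T_id : ∀ A B : 𝒞, T (𝟙 A) (𝟙 B) = 𝟙 (O A B))
    (T_comp : ∀ {A B A' B' A'' B'' : 𝒞} (f : A ⟶ A') (g : B ⟶ B') (f' : A' ⟶ A'')
      (g' : B' ⟶ B''), T f g ≫ T f' g' = T (f ≫ f') (g ≫ g'))
    (α : ∀ A B C : 𝒞, O (O A B) C ≅ O A (O B C))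
    (nat : ∀ {A B C A' B' C' : 𝒞} (f : A ⟶ A') (g : B ⟶ B') (h : C ⟶ C'),
      T (T f g) h ≫ (α A' B' C').hom = (α A B C).hom ≫ T f (T g h))
    (pentagon : ∀ A B C D : 𝒞,
      (α (O A B) C D).hom ≫ (α A B (O C D)).hom =
        T (α A B C).hom (𝟙 D) ≫ (α A (O B C) D).hom ≫ T (𝟙 A) (α B C D).hom)
    (P : 𝒞) (θ : O P P ≅ P) (C : P ⟶ P)
    (hC : T θ.hom (𝟙 P) ≫ θ.hom ≫ C = (α P P P).hom ≫ T (𝟙 P) θ.hom ≫ θ.hom)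
    (hleft : T C (𝟙 P) ≫ θ.hom = θ.hom ≫ C)
    (hright : T (𝟙 P) C ≫ θ.hom = θ.hom ≫ C) : C = 𝟙 P := by
  have isoT : ∀ {A B A' B' : 𝒞} (f : A ⟶ A') (g : B ⟶ B') [IsIso f] [IsIso g],
      IsIso (T f g) := by
    intro A B A' B' f g _ _
    exact ⟨T (inv f) (inv g), by simp [T_comp, T_id], by simp [T_comp, T_id]⟩
  have i1 : IsIso (T θ.hom (𝟙 P)) := isoT _ _
  have i2 : IsIso (T (𝟙 P) θ.hom) := isoT _ _
  have i3 : IsIso (T (T θ.hom (𝟙 P)) (𝟙 P)) := isoT _ _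
  have hCi : C = inv (T θ.hom (𝟙 P) ≫ θ.hom) ≫ (α P P P).hom ≫ T (𝟙 P) θ.hom ≫ θ.hom := by
    rw [← hC]; simp
  have i4 : IsIso C := by rw [hCi]; infer_instance
  have e1 : ((α (O P P) P P).hom ≫ (α P P (O P P)).hom) ≫
      T (𝟙 P) (T (𝟙 P) θ.hom) ≫ T (𝟙 P) θ.hom ≫ θ.hom =
      T (T θ.hom (𝟙 P)) (𝟙 P) ≫ T θ.hom (𝟙 P) ≫ θ.hom ≫ C ≫ C := by
    calc _ = (α (O P P) P P).hom ≫ ((α P P (O P P)).hom ≫ T (𝟙 P) (T (𝟙 P) θ.hom)) ≫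
          T (𝟙 P) θ.hom ≫ θ.hom := by simp only [Category.assoc]
      _ = (α (O P P) P P).hom ≫ T (𝟙 (O P P)) θ.hom ≫ ((α P P P).hom ≫
          T (𝟙 P) θ.hom ≫ θ.hom) := by rw [← nat, T_id]; simp only [Category.assoc]
      _ = (α (O P P) P P).hom ≫ (T (𝟙 (O P P)) θ.hom ≫ T θ.hom (𝟙 P)) ≫ θ.hom ≫ C := by
          rw [← hC]; simp only [Category.assoc]
      _ = (α (O P P) P P).hom ≫ (T θ.hom (T (𝟙 P) (𝟙 P)) ≫ T (𝟙 P) θ.hom) ≫ θ.hom ≫ C := by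
          simp only [T_comp, T_id, Category.id_comp, Category.comp_id]
      _ = ((α (O P P) P P).hom ≫ T θ.hom (T (𝟙 P) (𝟙 P))) ≫ T (𝟙 P) θ.hom ≫ θ.hom ≫ C := by
          simp only [Category.assoc]
      _ = T (T θ.hom (𝟙 P)) (𝟙 P) ≫ ((α P P P).hom ≫ T (𝟙 P) θ.hom ≫ θ.hom) ≫ C := by
          rw [← nat]; simp only [Category.assoc]
      _ = _ := by rw [← hC]; simp only [Category.assoc]
  have e2 : (T (α P P P).hom (𝟙 P) ≫ (α P (O P P) P).hom ≫ T (𝟙 P) (α P P P).hom) ≫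
      T (𝟙 P) (T (𝟙 P) θ.hom) ≫ T (𝟙 P) θ.hom ≫ θ.hom =
      T (T θ.hom (𝟙 P)) (𝟙 P) ≫ T θ.hom (𝟙 P) ≫ θ.hom ≫ C ≫ C ≫ C := by
    have a1 : T (𝟙 P) (α P P P).hom ≫ T (𝟙 P) (T (𝟙 P) θ.hom) ≫ T (𝟙 P) θ.hom =
        T (𝟙 P) (T θ.hom (𝟙 P)) ≫ T (𝟙 P) θ.hom ≫ T (𝟙 P) C := by
      simp only [T_comp, Category.id_comp, hC]
    have a2 : T (α P P P).hom (𝟙 P) ≫ T (T (𝟙 P) θ.hom) (𝟙 P) ≫ T θ.hom (𝟙 P) =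
        T (T θ.hom (𝟙 P)) (𝟙 P) ≫ T θ.hom (𝟙 P) ≫ T C (𝟙 P) := by
      simp only [T_comp, Category.id_comp, hC]
    calc _ = T (α P P P).hom (𝟙 P) ≫ (α P (O P P) P).hom ≫ (T (𝟙 P) (α P P P).hom ≫
          T (𝟙 P) (T (𝟙 P) θ.hom) ≫ T (𝟙 P) θ.hom) ≫ θ.hom := by simp only [Category.assoc]
      _ = T (α P P P).hom (𝟙 P) ≫ ((α P (O P P) P).hom ≫ T (𝟙 P) (T θ.hom (𝟙 P))) ≫
          T (𝟙 P) θ.hom ≫ θ.hom ≫ C := by rw [a1]; simp only [Category.assoc, hright]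
      _ = T (α P P P).hom (𝟙 P) ≫ T (T (𝟙 P) θ.hom) (𝟙 P) ≫ ((α P P P).hom ≫
          T (𝟙 P) θ.hom ≫ θ.hom) ≫ C := by rw [← nat]; simp only [Category.assoc]
      _ = (T (α P P P).hom (𝟙 P) ≫ T (T (𝟙 P) θ.hom) (𝟙 P) ≫ T θ.hom (𝟙 P)) ≫
          θ.hom ≫ C ≫ C := by rw [← hC]; simp only [Category.assoc]
      _ = T (T θ.hom (𝟙 P)) (𝟙 P) ≫ T θ.hom (𝟙 P) ≫ (T C (𝟙 P) ≫ θ.hom) ≫ C ≫ C := by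
          rw [a2]; simp only [Category.assoc]
      _ = _ := by rw [hleft]; simp only [Category.assoc]
  have e3 := e1.symm.trans ((congrArg (· ≫ _) (pentagon P P P P)).trans e2)
  simp only [cancel_epi] at e3
  rw [← cancel_epi C, Category.comp_id]
  exact e3.symm

theorem idempotent_theorem {𝒞 : Type u} [Category.{v} 𝒞]
    (tensor : 𝒞 × 𝒞 ⥤ 𝒞)
    (α : ∀ A B C : 𝒞, tensor.obj (tensor.obj (A, B), C) ≅ tensor.obj (A, tensor.obj (B, C)))
    (α_natural : ∀ {A B C A' B' C' : 𝒞} (f : A ⟶ A') (g : B ⟶ B') (h : C ⟶ C'),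
      tensor.map ((tensor.map ((f, g) : (A, B) ⟶ (A', B')), h) :
          (tensor.obj (A, B), C) ⟶ (tensor.obj (A', B'), C')) ≫ (α A' B' C').hom =
        (α A B C).hom ≫
          tensor.map ((f, tensor.map ((g, h) : (B, C) ⟶ (B', C'))) :
            (A, tensor.obj (B, C)) ⟶ (A', tensor.obj (B', C'))))
    (pentagon : ∀ A B C D : 𝒞,
      (α (tensor.obj (A, B)) C D).hom ≫ (α A B (tensor.obj (C, D))).hom =
        tensor.map (((α A B C).hom, 𝟙 D) :
            (tensor.obj (tensor.obj (A, B), C), D) ⟶ (tensor.obj (A, tensor.obj (B, C)), D)) ≫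
          (α A (tensor.obj (B, C)) D).hom ≫
          tensor.map ((𝟙 A, (α B C D).hom) :
            (A, tensor.obj (tensor.obj (B, C), D)) ⟶ (A, tensor.obj (B, tensor.obj (C, D)))))
    (P : 𝒞) (θ : tensor.obj (P, P) ≅ P) (C : P ⟶ P)
    (hC : tensor.map ((θ.hom, 𝟙 P) : (tensor.obj (P, P), P) ⟶ (P, P)) ≫ θ.hom ≫ C =
      (α P P P).hom ≫ tensor.map ((𝟙 P, θ.hom) : (P, tensor.obj (P, P)) ⟶ (P, P)) ≫ θ.hom)
    (hleft : tensor.map ((C, 𝟙 P) : (P, P) ⟶ (P, P)) ≫ θ.hom = θ.hom ≫ C)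
    (hright : tensor.map ((𝟙 P, C) : (P, P) ⟶ (P, P)) ≫ θ.hom = θ.hom ≫ C) :
    C = 𝟙 P := by
  refine idem_aux (fun A B => tensor.obj (A, B))
    (fun {A B A' B'} f g => tensor.map ((f, g) : (A, B) ⟶ (A', B')))
    (fun A B => tensor.map_id (A, B))
    (fun {A B A' B' A'' B''} f g f' g' => (tensor.map_comp ((f, g) : (A, B) ⟶ (A', B'))
      ((f', g') : (A', B') ⟶ (A'', B''))).symm)
    α α_natural pentagon P θ C hC hleft hright
end

section
/- Let 𝒞 be a category, ⊗ : 𝒞 × 𝒞 → 𝒞 a functor, and α a natural isomorphism with components α_{A,B,C} : (A ⊗ B) ⊗ C ≅ A ⊗ (B ⊗ C) satisfying the pentagon identity. Let P be an object of 𝒞, θ : P ⊗ P ≅ P an isomorphism, and let C : P → P be the unique morphism satisfying C ∘ θ ∘ (θ ⊗ id_P) = θ ∘ (id_P ⊗ θ) ∘ α_{P,P,P}. If θ ∘ (C ⊗ id_P) = C ∘ θ and θ ∘ (id_P ⊗ C) = C ∘ θ, then C ∘ C ∘ C = C ∘ C (the identity C³ = C² derived from the pentagon coherence applied to the fourfold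 tensor power of P). -/
/-!
STATEMENT 1: Let `𝒞` be a category, `⊗ : 𝒞 × 𝒞 ⥤ 𝒞` a functor ("operation"), `α` a
natural isomorphism `(A ⊗ B) ⊗ C ≅ A ⊗ (B ⊗ C)` satisfying the pentagon identity,
`(P, θ)` an idempotent, and `C : P ⟶ P` the morphism defined by the commutative diagram
`C ∘ θ ∘ (θ ⊗ id) = θ ∘ (id ⊗ θ) ∘ α`.  If `θ ∘ (C ⊗ id) = C ∘ θ` and
`θ ∘ (id ⊗ C) = C ∘ θ`, then `C ∘ C ∘ C = C ∘ C` (the identity `C³ = C²`).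
-/

open CategoryTheory

universe v u

theorem aux_C {𝒞 : Type u} [Category.{v} 𝒞] (T : 𝒞 → 𝒞 → 𝒞)
    (m : ∀ {A B A' B' : 𝒞}, (A ⟶ A') → (B ⟶ B') → (T A B ⟶ T A' B'))
    (m_id : ∀ A B : 𝒞, m (𝟙 A) (𝟙 B) = 𝟙 (T A B))
    (m_comp : ∀ {A B A' B' A'' B'' : 𝒞} (f : A ⟶ A') (g : B ⟶ B') (f' : A' ⟶ A'') (g' : B' ⟶ B''),
      m (f ≫ f') (g ≫ g') = m f g ≫ m f' g')
    (a : ∀ A B C : 𝒞, T (T A B) C ⟶ T A (T B C))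
    (nat : ∀ {A B C A' B' C' : 𝒞} (f : A ⟶ A') (g : B ⟶ B') (h : C ⟶ C'),
      m (m f g) h ≫ a A' B' C' = a A B C ≫ m f (m g h))
    (pent : ∀ A B C D : 𝒞, a (T A B) C D ≫ a A B (T C D) =
      m (a A B C) (𝟙 D) ≫ a A (T B C) D ≫ m (𝟙 A) (a B C D))
    (P : 𝒞) (t : T P P ⟶ P) (s : P ⟶ T P P) (hst : s ≫ t = 𝟙 P) (C : P ⟶ P)
    (hC : m t (𝟙 P) ≫ t ≫ C = a P P P ≫ m (𝟙 P) t ≫ t)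
    (hl : m C (𝟙 P) ≫ t = t ≫ C) (hr : m (𝟙 P) C ≫ t = t ≫ C) :
    C ≫ C ≫ C = C ≫ C := by
  have wl : ∀ {X Y Z : 𝒞} (f : X ⟶ Y) (g : Y ⟶ Z),
      m (f ≫ g) (𝟙 P) = m f (𝟙 P) ≫ m g (𝟙 P) := fun f g => by
    rw [← m_comp, Category.comp_id]
  have wr : ∀ {X Y Z : 𝒞} (f : X ⟶ Y) (g : Y ⟶ Z),
      m (𝟙 P) (f ≫ g) = m (𝟙 P) f ≫ m (𝟙 P) g := fun f g => by
    rw [← m_comp, Category.comp_id]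
  have ex : m (𝟙 (T P P)) t ≫ m t (𝟙 P) = m t (𝟙 (T P P)) ≫ m (𝟙 P) t := by
    simp only [← m_comp, Category.comp_id, Category.id_comp]
  have n1 := nat (𝟙 P) (𝟙 P) t
  have n2 := nat t (𝟙 P) (𝟙 P)
  have n3 := nat (𝟙 P) t (𝟙 P)
  rw [m_id] at n1 n2
  have e1 : (a (T P P) P P ≫ a P P (T P P)) ≫ m (𝟙 P) (m (𝟙 P) t) ≫ m (𝟙 P) t ≫ t =
      (m (m t (𝟙 P)) (𝟙 P) ≫ m t (𝟙 P) ≫ t) ≫ C ≫ C := by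
    calc _ = a (T P P) P P ≫ (a P P (T P P) ≫ m (𝟙 P) (m (𝟙 P) t)) ≫ m (𝟙 P) t ≫ t := by
            simp only [Category.assoc]
      _ = a (T P P) P P ≫ m (𝟙 (T P P)) t ≫ a P P P ≫ m (𝟙 P) t ≫ t := by
            rw [← n1]; simp only [Category.assoc]
      _ = a (T P P) P P ≫ (m (𝟙 (T P P)) t ≫ m t (𝟙 P)) ≫ t ≫ C := by
            rw [← hC]; simp only [Category.assoc]
      _ = (a (T P P) P P ≫ m t (𝟙 (T P P))) ≫ m (𝟙 P) t ≫ t ≫ C := by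
            rw [ex]; simp only [Category.assoc]
      _ = m (m t (𝟙 P)) (𝟙 P) ≫ (a P P P ≫ m (𝟙 P) t ≫ t) ≫ C := by
            rw [← n2]; simp only [Category.assoc]
      _ = _ := by rw [← hC]; simp only [Category.assoc]
  have e2 : (m (a P P P) (𝟙 P) ≫ a P (T P P) P ≫ m (𝟙 P) (a P P P)) ≫
      m (𝟙 P) (m (𝟙 P) t) ≫ m (𝟙 P) t ≫ t =
      (m (m t (𝟙 P)) (𝟙 P) ≫ m t (𝟙 P) ≫ t) ≫ C ≫ C ≫ C := by
    calc _ = m (a P P P) (𝟙 P) ≫ a P (T P P) P ≫ m (𝟙 P) (a P P P ≫ m (𝟙 P) t ≫ t) ≫ t := by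
            simp only [wr, Category.assoc]
      _ = m (a P P P) (𝟙 P) ≫ (a P (T P P) P ≫ m (𝟙 P) (m t (𝟙 P))) ≫ m (𝟙 P) t ≫
            m (𝟙 P) C ≫ t := by
            rw [← hC]; simp only [wr, Category.assoc]
      _ = m (a P P P) (𝟙 P) ≫ m (m (𝟙 P) t) (𝟙 P) ≫ (a P P P ≫ m (𝟙 P) t ≫ t) ≫ C := by
            rw [← n3, hr]; simp only [Category.assoc]
      _ = m (a P P P ≫ m (𝟙 P) t ≫ t) (𝟙 P) ≫ t ≫ C ≫ C := by
            rw [wl, wl, ← hC]; simp only [Category.assoc]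
      _ = m (m t (𝟙 P)) (𝟙 P) ≫ m t (𝟙 P) ≫ (m C (𝟙 P) ≫ t) ≫ C ≫ C := by
            rw [← hC]; simp only [wl, Category.assoc]
      _ = _ := by rw [hl]; simp only [Category.assoc]
  have k : (s ≫ m s (𝟙 P) ≫ m (m s (𝟙 P)) (𝟙 P)) ≫
      (m (m t (𝟙 P)) (𝟙 P) ≫ m t (𝟙 P) ≫ t) = 𝟙 P := by
    have h1 : m s (𝟙 P) ≫ m t (𝟙 P) = 𝟙 _ := by rw [← wl, hst, m_id]
    have h2 : m (m s (𝟙 P)) (𝟙 P) ≫ m (m t (𝟙 P)) (𝟙 P) = 𝟙 _ := by rw [← wl, h1, m_id]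
    calc _ = s ≫ m s (𝟙 P) ≫ (m (m s (𝟙 P)) (𝟙 P) ≫ m (m t (𝟙 P)) (𝟙 P)) ≫
              m t (𝟙 P) ≫ t := by simp only [Category.assoc]
      _ = s ≫ (m s (𝟙 P) ≫ m t (𝟙 P)) ≫ t := by
            rw [h2]; simp only [Category.assoc, Category.id_comp]
      _ = _ := by rw [h1, Category.id_comp, hst]
  rw [pent, e2] at e1
  calc C ≫ C ≫ C = 𝟙 P ≫ C ≫ C ≫ C := (Category.id_comp _).symm
    _ = 𝟙 P ≫ C ≫ C := by
      rw [← k, Category.assoc, e1, ← Category.assoc]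
    _ = C ≫ C := Category.id_comp _

theorem idempotent_C_cubed_eq_C_squared {𝒞 : Type u} [Category.{v} 𝒞]
    (tensor : 𝒞 × 𝒞 ⥤ 𝒞)
    (α : ∀ A B C : 𝒞, tensor.obj (tensor.obj (A, B), C) ≅ tensor.obj (A, tensor.obj (B, C)))
    (α_natural : ∀ {A B C A' B' C' : 𝒞} (f : A ⟶ A') (g : B ⟶ B') (h : C ⟶ C'),
      tensor.map ((tensor.map ((f, g) : (A, B) ⟶ (A', B')), h) :
          (tensor.obj (A, B), C) ⟶ (tensor.obj (A', B'), C')) ≫ (α A' B' C').hom =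
        (α A B C).hom ≫
          tensor.map ((f, tensor.map ((g, h) : (B, C) ⟶ (B', C'))) :
            (A, tensor.obj (B, C)) ⟶ (A', tensor.obj (B', C'))))
    (pentagon : ∀ A B C D : 𝒞,
      (α (tensor.obj (A, B)) C D).hom ≫ (α A B (tensor.obj (C, D))).hom =
        tensor.map (((α A B C).hom, 𝟙 D) :
            (tensor.obj (tensor.obj (A, B), C), D) ⟶ (tensor.obj (A, tensor.obj (B, C)), D)) ≫
          (α A (tensor.obj (B, C)) D).hom ≫
          tensor.map ((𝟙 A, (α B C D).hom) :
            (A, tensor.obj (tensor.obj (B, C), D)) ⟶ (A, tensor.obj (B, tensor.obj (C, D)))))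
    (P : 𝒞) (θ : tensor.obj (P, P) ≅ P) (C : P ⟶ P)
    (hC : tensor.map ((θ.hom, 𝟙 P) : (tensor.obj (P, P), P) ⟶ (P, P)) ≫ θ.hom ≫ C =
      (α P P P).hom ≫ tensor.map ((𝟙 P, θ.hom) : (P, tensor.obj (P, P)) ⟶ (P, P)) ≫ θ.hom)
    (hleft : tensor.map ((C, 𝟙 P) : (P, P) ⟶ (P, P)) ≫ θ.hom = θ.hom ≫ C)
    (hright : tensor.map ((𝟙 P, C) : (P, P) ⟶ (P, P)) ≫ θ.hom = θ.hom ≫ C) :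
    C ≫ C ≫ C = C ≫ C := by
  exact aux_C (fun A B => tensor.obj (A, B))
    (fun {A B A' B'} f g => tensor.map ((f, g) : (A, B) ⟶ (A', B')))
    (fun A B => tensor.map_id (A, B))
    (fun {A B A' B' A'' B''} f g f' g' =>
      tensor.map_comp ((f, g) : (A, B) ⟶ (A', B')) ((f', g') : (A', B') ⟶ (A'', B'')))
    (fun A B C => (α A B C).hom) α_natural pentagon P θ.hom θ.inv θ.inv_hom_id C hC hleft hright
end

section
/- There exists a finite-dimensional complex irreducible representation π : H → GL(ℋ) such that π((0,z)) = ψ(z)·Id_ℋ for every z ∈ k, and any two such representations are isomorphic (the Stone–von Neumann theorem: the Heisenberg representation with central character ψ exists and is unique up to isomorphism). -/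
open scoped BigOperators
attribute [local instance] Classical.propDecidable

variable {k : Type} [Field k] [Fintype k]
variable {V : Type} [AddCommGroup V] [Module k V] [Fintype V]

/-- Multiplication of the Heisenberg group `H = V × k`:
`(v,z)·(v',z') = (v + v', z + z' + (1/2) ω(v,v'))`. -/
def hMul (ω : V →ₗ[k] V →ₗ[k] k) (x y : V × k) : V × k :=
  (x.1 + y.1, x.2 + y.2 + (2 : k)⁻¹ * ω x.1 y.1)

/-- Inversion in the Heisenberg group. -/
def hInv (ω : V →ₗ[k] V →ₗ[k] k) (x : V × k) : V × k :=
  (-x.1, -x.2 + (2 : k)⁻¹ * ω x.1 x.1)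

/-- Right translation `(π(h)f)(h') = f(h'·h)` of functions on the Heisenberg group. -/
def rt (ω : V →ₗ[k] V →ₗ[k] k) (h : V × k) (f : V × k → ℂ) : V × k → ℂ :=
  fun x => f (hMul ω x h)

/-- The model `ℂ(L\H, ψ)`: functions `f : H → ℂ` with `f((0,z)·(l,0)·h) = ψ(z)·f(h)`
for `z ∈ k`, `l ∈ L`. -/
noncomputable def model (ω : V →ₗ[k] V →ₗ[k] k) (L : Submodule k V) (ψ : k → ℂ) :
    Submodule ℂ (V × k → ℂ) where
  carrier := {f | ∀ z : k, ∀ l ∈ L, ∀ h : V × k,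
    f (hMul ω ((0 : V), z) (hMul ω (l, (0 : k)) h)) = ψ z * f h}
  add_mem' := by
    intro f g hf hg z l hl h
    simp only [Pi.add_apply, hf z l hl h, hg z l hl h]; ring
  zero_mem' := by intro z l hl h; simp
  smul_mem' := by
    intro c f hf z l hl h
    simp only [Pi.smul_apply, smul_eq_mul, hf z l hl h]; ring

/-- The space `ℂ(M\H/L, ψ)`: functions `K : H → ℂ` with
`K((0,z)·(m,0)·h·(l,0)) = ψ(z)·K(h)` for `z ∈ k`, `m ∈ M`, `l ∈ L`. -/
noncomputable def biModel (ω : V →ₗ[k] V →ₗ[k] k) (M L : Submodule k V) (ψ : k → ℂ) :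
    Submodule ℂ (V × k → ℂ) where
  carrier := {f | ∀ z : k, ∀ m ∈ M, ∀ l ∈ L, ∀ h : V × k,
    f (hMul ω (hMul ω (hMul ω ((0 : V), z) (m, (0 : k))) h) (l, (0 : k))) = ψ z * f h}
  add_mem' := by
    intro f g hf hg z m hm l hl h
    simp only [Pi.add_apply, hf z m hm l hl h, hg z m hm l hl h]; ring
  zero_mem' := by intro z m hm l hl h; simp
  smul_mem' := by
    intro c f hf z m hm l hl h
    simp only [Pi.smul_apply, smul_eq_mul, hf z m hm l hl h]; ring

/-- The averaging operator `F_{M,L}[f](h) = ∑_{m ∈ M} f((m,0)·h)`. -/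
noncomputable def avg (ω : V →ₗ[k] V →ₗ[k] k) (M : Submodule k V) :
    (V × k → ℂ) →ₗ[ℂ] (V × k → ℂ) where
  toFun f := fun h => ∑ m : M, f (hMul ω ((m : V), (0 : k)) h)
  map_add' f g := by funext h; simp [Finset.sum_add_distrib]
  map_smul' c f := by funext h; simp [Finset.mul_sum]

/-- Normalized convolution on the Heisenberg group:
`(K ∗ f)(h) = q^{-(n+1)} ∑_{h' ∈ H} K(h')·f(h'⁻¹·h)`. -/
noncomputable def conv (ω : V →ₗ[k] V →ₗ[k] k) (n : ℕ) (K f : V × k → ℂ) : V × k → ℂ :=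
  fun h => ((Fintype.card k : ℂ))⁻¹ ^ (n + 1) * ∑ x : V × k, K x * f (hMul ω (hInv ω x) h)

/-- The one-dimensional Gauss sum `G(ψ) = ∑_{z ∈ k} ψ(z²/2)`. -/
noncomputable def gaussSum' (ψ : k → ℂ) : ℂ := ∑ z : k, ψ ((2 : k)⁻¹ * z ^ 2)

/-- The normalization coefficient `A_{M°,L°} = (G(ψ)/q)ⁿ · σ((−1)^{n(n−1)/2} ω_∧(o_L,o_M))`,
with the orientations presented by bases and `ω_∧(o_L,o_M) = det (ω(bL i, bM j))_{ij}`,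
and `σ` the Legendre (quadratic) character. -/
noncomputable def Acoef (ω : V →ₗ[k] V →ₗ[k] k) (ψ : k → ℂ) (n : ℕ)
    {M L : Submodule k V} (bM : Module.Basis (Fin n) k M) (bL : Module.Basis (Fin n) k L) : ℂ :=
  (gaussSum' ψ / (Fintype.card k : ℂ)) ^ n *
    ((quadraticChar k ((-1 : k) ^ (n * (n - 1) / 2) *
      (Matrix.of fun i j => ω ((bL i : V)) ((bM j : V))).det) : ℤ) : ℂ)

/-- The symplectic group `Sp(V)` of linear automorphisms of `V` preserving `ω`. -/
def Sp (ω : V →ₗ[k] V →ₗ[k] k) : Subgroup (V ≃ₗ[k] V) where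
  carrier := {g | ∀ u v : V, ω (g u) (g v) = ω u v}
  one_mem' := by intro u v; rfl
  mul_mem' := by
    intro a b ha hb u v
    have h : ∀ x : V, (a * b) x = a (b x) := fun x => rfl
    rw [h, h, ha, hb]
  inv_mem' := by
    intro a ha u v
    have h1 : a (a⁻¹ u) = u := a.apply_symm_apply u
    have h2 : a (a⁻¹ v) = v := a.apply_symm_apply v
    have := ha (a⁻¹ u) (a⁻¹ v)
    rw [h1, h2] at this
    exact this.symm

/-- A nontrivial (nowhere-vanishing) additive character `ψ : k → ℂ*`. -/
def IsAddChar (ψ : k → ℂ) : Prop :=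
  (∀ a b : k, ψ (a + b) = ψ a * ψ b) ∧ (∀ a : k, ψ a ≠ 0) ∧ (∃ a : k, ψ a ≠ 1)

/-- `π` is a Heisenberg representation on `ℋ` with central character `ψ`:
a representation of `H = V × k` by linear maps, with the center acting by `ψ`,
which is irreducible. -/
def IsHeisenbergRep (ω : V →ₗ[k] V →ₗ[k] k) (ψ : k → ℂ)
    {ℋ : Type} [AddCommGroup ℋ] [Module ℂ ℋ] (π : V × k → (ℋ →ₗ[ℂ] ℋ)) : Prop :=
  π ((0 : V), (0 : k)) = LinearMap.id ∧
  (∀ x y : V × k, π (hMul ω x y) = (π x).comp (π y)) ∧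
  (∀ z : k, π ((0 : V), z) = ψ z • LinearMap.id) ∧
  (∀ W : Submodule ℂ ℋ, (∀ x : V × k, ∀ w ∈ W, π x w ∈ W) → W = ⊥ ∨ W = ⊤)

/-- The action `g_*` of a symplectic automorphism on functions on `H`, `(g_* f)(h) = f(g⁻¹·h)`. -/
def gstar (g : V ≃ₗ[k] V) (f : V × k → ℂ) : V × k → ℂ :=
  fun x => f (g.symm x.1, x.2)


theorem svn_psi_zero {ψ : k → ℂ} (hψ : IsAddChar ψ) : ψ 0 = 1 := by
  have h := hψ.1 0 0
  rw [add_zero] at h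
  exact mul_left_cancel₀ (hψ.2.1 0) (by rw [← h, mul_one])

/-- The big (reducible) representation on functions on `V`. -/
noncomputable def svnBig (ω : V →ₗ[k] V →ₗ[k] k) (ψ : k → ℂ) (x : V × k) :
    (V → ℂ) →ₗ[ℂ] (V → ℂ) where
  toFun f := fun v => ψ (x.2 + (2 : k)⁻¹ * ω v x.1) * f (v + x.1)
  map_add' f g := by funext v; simp [mul_add]
  map_smul' c f := by funext v; simp; ring

theorem svn_exists (ω : V →ₗ[k] V →ₗ[k] k) (ψ : k → ℂ) (hψ : IsAddChar ψ) :
    ∃ (ℋ : Type) (_ : AddCommGroup ℋ) (_ : Module ℂ ℋ),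
        Nontrivial ℋ ∧ FiniteDimensional ℂ ℋ ∧
        ∃ π : V × k → (ℋ →ₗ[ℂ] ℋ), IsHeisenbergRep ω ψ π := by
  have hmul : ∀ x y f, svnBig ω ψ (hMul ω x y) f = svnBig ω ψ x (svnBig ω ψ y f) := by
    intro x y f
    funext v
    simp only [svnBig, hMul, LinearMap.coe_mk, AddHom.coe_mk]
    rw [← mul_assoc, ← hψ.1, add_assoc v]
    congr 2
    simp only [map_add, LinearMap.add_apply]
    ring
  have hcen : ∀ z f, svnBig ω ψ ((0 : V), z) f = ψ z • f := by
    intro z f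
    funext v
    simp [svnBig]
  let S : Set (Submodule ℂ (V → ℂ)) :=
    {W | W ≠ ⊥ ∧ ∀ x : V × k, ∀ w ∈ W, svnBig ω ψ x w ∈ W}
  have hS : S.Nonempty := ⟨⊤, top_ne_bot, fun _ _ _ => trivial⟩
  obtain ⟨W, ⟨hW0, hWi⟩, hmin⟩ := wellFounded_lt.has_min S hS
  refine ⟨W, inferInstance, inferInstance, ?_, inferInstance,
    fun x => (svnBig ω ψ x).restrict (hWi x), ?_, ?_, ?_, ?_⟩
  · exact Submodule.nontrivial_iff_ne_bot.mpr hW0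
  · ext1 w
    apply Subtype.ext
    simp [LinearMap.restrict_apply, hcen, svn_psi_zero hψ]
  · intro x y
    ext1 w
    apply Subtype.ext
    simp [LinearMap.restrict_apply, hmul]
  · intro z
    ext1 w
    apply Subtype.ext
    simp [LinearMap.restrict_apply, hcen]
  · intro U hU
    by_cases h : U = ⊥
    · exact Or.inl h
    right
    have hle : U.map W.subtype ≤ W := Submodule.map_subtype_le W U
    have hmem : U.map W.subtype ∈ S := by
      refine ⟨fun hb => h ?_, ?_⟩
      · exact Submodule.map_injective_of_injective W.injective_subtype (by rw [hb, Submodule.map_bot])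
      · rintro x _ ⟨w, hw, rfl⟩
        exact ⟨_, hU x w hw, rfl⟩
    have heq : U.map W.subtype = W := by
      by_contra hne
      exact hmin _ hmem (lt_of_le_of_ne hle hne)
    rw [eq_top_iff]
    rintro ⟨w, hw⟩ -
    have hw' := hw
    rw [← heq] at hw'
    obtain ⟨u, hu, huw⟩ := hw'
    have : u = ⟨w, hw⟩ := Subtype.ext huw
    exact this ▸ hu

theorem svn_orth (ω : V →ₗ[k] V →ₗ[k] k) (halt : ∀ v : V, ω v v = 0)
    (hnd : ∀ v : V, (∀ u : V, ω v u = 0) → v = 0)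
    (ψ : k → ℂ) (hψ : IsAddChar ψ) (v : V) (hv : v ≠ 0) :
    ∑ u : V, ψ (ω v u) = 0 := by
  obtain ⟨a, ha⟩ := hψ.2.2
  have : ∃ u, ω v u ≠ 0 := by
    by_contra hc
    push Not at hc
    exact hv (hnd v hc)
  obtain ⟨u, hu⟩ := this
  have h0 : ω v ((a / ω v u) • u) = a := by
    simp [hu]
  have h1 : ∑ w : V, ψ (ω v w) = ψ a * ∑ w : V, ψ (ω v w) := by
    rw [Finset.mul_sum, ← Equiv.sum_comp (Equiv.addLeft ((a / ω v u) • u))]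
    refine Finset.sum_congr rfl fun w _ => ?_
    rw [Equiv.coe_addLeft, map_add, h0, hψ.1]
  by_contra hne
  exact ha (mul_right_cancel₀ hne (by rw [← h1, one_mul]))

theorem svn_unique (ω : V →ₗ[k] V →ₗ[k] k) (hchar : ringChar k ≠ 2)
    (halt : ∀ v : V, ω v v = 0)
    (hnd : ∀ v : V, (∀ u : V, ω v u = 0) → v = 0)
    (ψ : k → ℂ) (hψ : IsAddChar ψ)
    (ℋ₁ : Type) [AddCommGroup ℋ₁] [Module ℂ ℋ₁]
    (ℋ₂ : Type) [AddCommGroup ℋ₂] [Module ℂ ℋ₂]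
    (π₁ : V × k → (ℋ₁ →ₗ[ℂ] ℋ₁)) (π₂ : V × k → (ℋ₂ →ₗ[ℂ] ℋ₂))
    (n1 : Nontrivial ℋ₁) (n2 : Nontrivial ℋ₂)
    (h1 : IsHeisenbergRep ω ψ π₁) (h2 : IsHeisenbergRep ω ψ π₂) :
    ∃ T : ℋ₁ ≃ₗ[ℂ] ℋ₂, ∀ (x : V × k) (v : ℋ₁), T (π₁ x v) = π₂ x (T v) := by
  have hanti : ∀ u v, ω u v = - ω v u := by
    intro u v
    have h := halt (u + v)
    simp only [map_add, LinearMap.add_apply, halt, zero_add, add_zero] at h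
    linear_combination h
  have h2ne : (2 : k) ≠ 0 := Ring.two_ne_zero hchar
  have key : ∀ {ℋ : Type} [AddCommGroup ℋ] [Module ℂ ℋ] (π : V × k → (ℋ →ₗ[ℂ] ℋ)),
      IsHeisenbergRep ω ψ π →
      (∀ v z w, π (v, z) w = ψ z • π (v, 0) w) ∧
      (∀ u v w, π (u, 0) (π (v, 0) w) = ψ ((2 : k)⁻¹ * ω u v) • π (u + v, 0) w) := by
    intro ℋ _ _ π h
    have a1 : ∀ v z w, π (v, z) w = ψ z • π (v, 0) w := by
      intro v z w
      have e := h.2.1 (0, z) (v, 0)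
      rw [h.2.2.1] at e
      simp only [hMul, zero_add, add_zero, map_zero, LinearMap.zero_apply, mul_zero] at e
      rw [e]; simp
    refine ⟨a1, fun u v w => ?_⟩
    have e := h.2.1 (u, 0) (v, 0)
    rw [← LinearMap.comp_apply, ← e]
    simp only [hMul, zero_add]
    exact a1 _ _ _
  obtain ⟨c1, m1⟩ := key π₁ h1
  obtain ⟨c2, m2⟩ := key π₂ h2
  let T : (ℋ₁ →ₗ[ℂ] ℋ₂) → (ℋ₁ →ₗ[ℂ] ℋ₂) := fun A =>
    ∑ v : V, (π₂ (v, 0)).comp (A.comp (π₁ (-v, 0)))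
  have hT : ∀ A w, T A w = ∑ v : V, π₂ (v, 0) (A (π₁ (-v, 0) w)) := by
    intro A w; simp [T, LinearMap.sum_apply]
  have hTi : ∀ A x w, T A (π₁ x w) = π₂ x (T A w) := by
    rintro A ⟨y, z⟩ w
    rw [c1, c2, map_smul, hT, hT, map_sum, ← Equiv.sum_comp (Equiv.addLeft y)]
    congr 1
    refine Finset.sum_congr rfl fun v _ => ?_
    rw [Equiv.coe_addLeft, m1, m2, map_smul, map_smul]
    have e1 : -(y + v) + y = -v := by abel
    have e2 : ω (-(y + v)) y = ω y v := by
      simp only [map_neg, map_add, LinearMap.neg_apply, LinearMap.add_apply, halt]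
      rw [hanti y v]; ring
    rw [e1, e2]
  have hex : ∃ A, T A ≠ 0 := by
    by_contra hc
    push Not at hc
    have hA : ∀ A : ℋ₁ →ₗ[ℂ] ℋ₂, A = 0 := by
      intro A
      ext w
      have s1 : ∀ u : V, ∑ v : V, ψ (ω v u) • π₂ (v, 0) (A (π₁ (-v, 0) w)) = 0 := by
        intro u
        have h := hT (A.comp (π₁ (u, 0))) (π₁ (-u, 0) w)
        rw [hc, LinearMap.zero_apply] at h
        rw [h]
        refine Finset.sum_congr rfl fun v _ => ?_
        rw [LinearMap.comp_apply, m1 (-v) (-u), map_smul, m1 u, map_smul, map_smul,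
          map_smul, map_smul, smul_smul, ← hψ.1]
        have e1 : u + (-v + -u) = -v := by abel
        have e2 : (2 : k)⁻¹ * ω (-v) (-u) + (2 : k)⁻¹ * ω u (-v + -u) = ω v u := by
          simp only [map_neg, map_add, LinearMap.neg_apply, halt]
          rw [hanti u v]
          field_simp
          ring
        rw [e1, e2]
      have s2 : ∑ u : V, ∑ v : V, ψ (ω v u) • π₂ (v, 0) (A (π₁ (-v, 0) w)) = 0 :=
        Finset.sum_eq_zero fun u _ => s1 u
      rw [Finset.sum_comm] at s2
      simp only [← Finset.sum_smul] at s2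
      rw [Finset.sum_eq_single (0 : V)] at s2
      · simpa [svn_psi_zero hψ, h1.1, h2.1] using s2
      · intro v _ hv
        rw [svn_orth ω halt hnd ψ hψ v hv, zero_smul]
      · simp
    obtain ⟨A, hAne⟩ := exists_ne (0 : ℋ₁ →ₗ[ℂ] ℋ₂)
    exact hAne (hA A)
  obtain ⟨A, hA⟩ := hex
  have hker : LinearMap.ker (T A) = ⊥ := by
    refine (h1.2.2.2 (LinearMap.ker (T A)) ?_).resolve_right ?_
    · intro x w hw
      rw [LinearMap.mem_ker] at hw ⊢
      rw [hTi, hw, map_zero]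
    · intro h
      exact hA (LinearMap.ker_eq_top.mp h)
  have hrange : LinearMap.range (T A) = ⊤ := by
    refine (h2.2.2.2 (LinearMap.range (T A)) ?_).resolve_left ?_
    · rintro x _ ⟨w, rfl⟩
      exact ⟨π₁ x w, hTi A x w⟩
    · intro h
      exact hA (LinearMap.range_eq_bot.mp h)
  exact ⟨LinearEquiv.ofBijective (T A)
    ⟨LinearMap.ker_eq_bot.mp hker, LinearMap.range_eq_top.mp hrange⟩, fun x w => hTi A x w⟩

/-- the Stone–von Neumann theorem.  There exists a finite-dimensional complex
irreducible representation `π : H → GL(ℋ)` with `π((0,z)) = ψ(z)·Id`, and any two such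
representations are isomorphic. -/
theorem stone_von_neumann
    (ω : V →ₗ[k] V →ₗ[k] k) (n : ℕ)
    (hchar : ringChar k ≠ 2)
    (hdim : Module.finrank k V = 2 * n)
    (halt : ∀ v : V, ω v v = 0)
    (hnd : ∀ v : V, (∀ u : V, ω v u = 0) → v = 0)
    (ψ : k → ℂ) (hψ : IsAddChar ψ)
    :
    (∃ (ℋ : Type) (_ : AddCommGroup ℋ) (_ : Module ℂ ℋ),
        Nontrivial ℋ ∧ FiniteDimensional ℂ ℋ ∧
        ∃ π : V × k → (ℋ →ₗ[ℂ] ℋ), IsHeisenbergRep ω ψ π) ∧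
    (∀ (ℋ₁ : Type) [AddCommGroup ℋ₁] [Module ℂ ℋ₁] [FiniteDimensional ℂ ℋ₁]
        (ℋ₂ : Type) [AddCommGroup ℋ₂] [Module ℂ ℋ₂] [FiniteDimensional ℂ ℋ₂]
        (π₁ : V × k → (ℋ₁ →ₗ[ℂ] ℋ₁)) (π₂ : V × k → (ℋ₂ →ₗ[ℂ] ℋ₂)),
        Nontrivial ℋ₁ → Nontrivial ℋ₂ →
        IsHeisenbergRep ω ψ π₁ → IsHeisenbergRep ω ψ π₂ →
        ∃ T : ℋ₁ ≃ₗ[ℂ] ℋ₂, ∀ (x : V × k) (v : ℋ₁), T (π₁ x v) = π₂ x (T v)) := by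
  refine ⟨svn_exists ω ψ hψ, ?_⟩
  intro ℋ₁ _ _ _ ℋ₂ _ _ _ π₁ π₂ n1 n2 h1 h2
  exact svn_unique ω hchar halt hnd ψ hψ ℋ₁ ℋ₂ π₁ π₂ n1 n2 h1 h2
end

section
/- For any Lagrangian subspaces L, M of V, the averaging formula F_{M,L}[f](h) = Σ_{m∈M} f((m,0)·h) defines a linear map F_{M,L} : ℂ(L\H, ψ) → ℂ(M\H, ψ) which commutes with the right-translation action of H; moreover, if L + M = V then F_{M,L} is an isomorphism. -/
open scoped BigOperators
attribute [local instance] Classical.propDecidable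

variable {k : Type} [Field k] [Fintype k]
variable {V : Type} [AddCommGroup V] [Module k V] [Fintype V]

theorem model_shift {ω : V →ₗ[k] V →ₗ[k] k} {L : Submodule k V} {ψ : k → ℂ} {f : V × k → ℂ}
    (hf : f ∈ model ω L ψ) (v : V) (z w c : k) (hw : w = z + c) :
    f (v, w) = ψ c * f (v, z) := by
  have h := hf c 0 L.zero_mem (v, z)
  simp only [hMul, map_zero, LinearMap.zero_apply, zero_add, mul_zero, add_zero] at h
  rw [hw, add_comm z c]; exact h

theorem avg_mem_model (ω : V →ₗ[k] V →ₗ[k] k) (ψ : k → ℂ) (L M : Submodule k V)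
    (hMiso : ∀ x ∈ M, ∀ y ∈ M, ω x y = 0) (f : V × k → ℂ) (hf : f ∈ model ω L ψ) :
    avg ω M f ∈ model ω M ψ := by
  intro z m' hm' h
  obtain ⟨v, y⟩ := h
  simp only [avg, LinearMap.coe_mk, AddHom.coe_mk, hMul]
  rw [Finset.mul_sum]
  refine Fintype.sum_equiv (Equiv.addRight (⟨m', hm'⟩ : M)) _ _ ?_
  intro m
  simp only [Equiv.coe_addRight, Submodule.coe_add]
  have e : (m : V) + (0 + (m' + v)) = m + m' + v := by abel
  rw [e]
  apply model_shift hf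
  simp only [map_add, map_zero, LinearMap.add_apply, LinearMap.zero_apply,
    hMiso m m.2 m' hm']
  ring

theorem sum_char (ω : V →ₗ[k] V →ₗ[k] k) (ψ : k → ℂ) (hψ : IsAddChar ψ) (L : Submodule k V)
    (v l₀ : V) (hl₀ : l₀ ∈ L) (hv : ω v l₀ ≠ 0) : ∑ l : L, ψ (ω v l) = 0 := by
  obtain ⟨hadd, -, a, ha⟩ := hψ
  set c := a * (ω v l₀)⁻¹
  have hc : ω v (c • l₀) = a := by
    simp [c, hv]
  have h : ∑ l : L, ψ (ω v l) = ψ a * ∑ l : L, ψ (ω v l) := by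
    rw [Finset.mul_sum]
    symm
    refine Fintype.sum_equiv (Equiv.addRight (⟨c • l₀, L.smul_mem c hl₀⟩ : L)) _ _ ?_
    intro l
    simp only [Equiv.coe_addRight, Submodule.coe_add, map_add, hc]
    rw [hadd, mul_comm]
  have h2 : (1 - ψ a) * ∑ l : L, ψ (ω v l) = 0 := by
    rw [sub_mul, one_mul, ← h, sub_self]
  exact (mul_eq_zero.mp h2).resolve_left (sub_ne_zero.mpr (Ne.symm ha))

theorem avg_avg (ω : V →ₗ[k] V →ₗ[k] k) (hchar : ringChar k ≠ 2)
    (halt : ∀ v : V, ω v v = 0)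
    (hnd : ∀ v : V, (∀ u : V, ω v u = 0) → v = 0)
    (ψ : k → ℂ) (hψ : IsAddChar ψ) (L M : Submodule k V)
    (hMiso : ∀ x ∈ M, ∀ y ∈ M, ω x y = 0) (hLM : L ⊔ M = ⊤)
    (f : V × k → ℂ) (hf : f ∈ model ω L ψ) :
    avg ω L (avg ω M f) = (Fintype.card L : ℂ) • f := by
  have h2 : (2 : k) ≠ 0 := Ring.two_ne_zero hchar
  have hψ0 : ψ 0 = 1 := by
    have h := hψ.1 0 0
    rw [add_zero] at h
    exact (mul_eq_left₀ (hψ.2.1 0)).mp h.symm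
  have hskew : ∀ u v, ω u v = - ω v u := by
    intro u v
    have h := halt (u + v)
    simp only [map_add, LinearMap.add_apply, halt, zero_add, add_zero] at h
    linear_combination h
  funext h
  obtain ⟨v, y⟩ := h
  simp only [avg, LinearMap.coe_mk, AddHom.coe_mk, hMul, Pi.smul_apply, smul_eq_mul]
  have key : ∀ (l : L) (m : M),
      f ((m : V) + (l + v), 0 + (0 + y + (2 : k)⁻¹ * ω l v) + (2 : k)⁻¹ * ω m (l + v))
        = ψ (ω m l) * f (m + v, y + (2 : k)⁻¹ * ω m v) := by
    intro l m
    have h := hf (ω m l) l l.2 (m + v, y + (2 : k)⁻¹ * ω m v)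
    rw [← h]
    simp only [hMul, map_add, map_zero, LinearMap.zero_apply]
    congr 1
    ext
    · simp only; abel
    · simp only
      rw [hskew l m]
      field_simp
      ring
  simp only [key]
  rw [Finset.sum_comm]
  simp only [← Finset.sum_mul]
  rw [Finset.sum_eq_single (0 : M)]
  · simp [hψ0]
  · intro m _ hm
    have : ∃ l₀ ∈ L, ω m l₀ ≠ 0 := by
      by_contra hcon
      push Not at hcon
      apply hm
      apply Subtype.ext
      apply hnd
      intro u
      have hu : u ∈ L ⊔ M := hLM ▸ Submodule.mem_top
      obtain ⟨a, ha, b, hb, rfl⟩ := Submodule.mem_sup.mp hu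
      rw [map_add, hcon a ha, hMiso m m.2 b hb, add_zero]
    obtain ⟨l₀, hl₀, hne⟩ := this
    rw [sum_char ω ψ hψ L m l₀ hl₀ hne, zero_mul]
  · simp

/-- the averaging formula `F_{M,L}[f](h) = ∑_{m ∈ M} f((m,0)·h)` defines a
linear map `ℂ(L\\H,ψ) → ℂ(M\\H,ψ)` commuting with right translation by `H`, which is an
isomorphism when `L + M = V`. -/
theorem averaging_operator
    (ω : V →ₗ[k] V →ₗ[k] k) (n : ℕ)
    (hchar : ringChar k ≠ 2)
    (hdim : Module.finrank k V = 2 * n)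
    (halt : ∀ v : V, ω v v = 0)
    (hnd : ∀ v : V, (∀ u : V, ω v u = 0) → v = 0)
    (ψ : k → ℂ) (hψ : IsAddChar ψ)
    (L M : Submodule k V)
    (hLiso : ∀ x ∈ L, ∀ y ∈ L, ω x y = 0) (hLrank : Module.finrank k L = n)
    (hMiso : ∀ x ∈ M, ∀ y ∈ M, ω x y = 0) (hMrank : Module.finrank k M = n) :
    (∀ f ∈ model ω L ψ, avg ω M f ∈ model ω M ψ) ∧
    (∀ f ∈ model ω L ψ, ∀ h : V × k, avg ω M (rt ω h f) = rt ω h (avg ω M f)) ∧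
    (L ⊔ M = ⊤ →
      (∀ f ∈ model ω L ψ, avg ω M f = 0 → f = 0) ∧
      (∀ g ∈ model ω M ψ, ∃ f ∈ model ω L ψ, avg ω M f = g)) := by
  refine ⟨fun f hf => avg_mem_model ω ψ L M hMiso f hf, ?_, ?_⟩
  · intro f _ h
    funext x
    simp only [avg, rt, LinearMap.coe_mk, AddHom.coe_mk]
    refine Finset.sum_congr rfl fun m _ => ?_
    congr 1
    simp only [hMul, map_add, LinearMap.add_apply]
    ext
    · simp only; abel
    · simp only; ring
  · intro hLM
    have hc : ∀ N : Submodule k V, (Fintype.card N : ℂ) ≠ 0 := fun N =>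
      Nat.cast_ne_zero.mpr Fintype.card_ne_zero
    constructor
    · intro f hf h0
      have h := avg_avg ω hchar halt hnd ψ hψ L M hMiso hLM f hf
      rw [h0, map_zero] at h
      exact (smul_eq_zero.mp h.symm).resolve_left (hc L)
    · intro g hg
      have h := avg_avg ω hchar halt hnd ψ hψ M L hLiso (by rw [sup_comm]; exact hLM) g hg
      refine ⟨(Fintype.card M : ℂ)⁻¹ • avg ω L g,
        Submodule.smul_mem _ _ (avg_mem_model ω ψ M L hLiso g hg), ?_⟩
      rw [map_smul, h, inv_smul_smul₀ (hc M)]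
end

section
/- Let L, M be Lagrangian subspaces of V with L + M = V. Then the composition of the inclusion Z ↪ H with the quotient map H ↠ M\H/L (double cosets with respect to the subgroups M × {0} and L × {0}) is a bijection from Z onto M\H/L. Consequently, the space ℂ(M\H/L, ψ) of functions K : H → ℂ satisfying K((0,z)·(m,0)·h·(l,0)) = ψ(z)·K(h) for all z ∈ k, m ∈ M, l ∈ L, h ∈ H is one-dimensional, spanned by the pullback τ*ψ of ψ along the inverse bijection τ : M\H/L → Z. -/
open scoped BigOperators
attribute [local instance] Classical.propDecidable

variable {k : Type} [Field k] [Fintype k]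
variable {V : Type} [AddCommGroup V] [Module k V] [Fintype V]

/-- for transversal Lagrangians `L, M`, the composition `Z ↪ H ↠ M\\H/L` is a
bijection; consequently `ℂ(M\\H/L, ψ)` is one-dimensional, spanned by the pullback `τ*ψ`. -/
theorem double_coset_space
    (ω : V →ₗ[k] V →ₗ[k] k) (n : ℕ)
    (hchar : ringChar k ≠ 2)
    (hdim : Module.finrank k V = 2 * n)
    (halt : ∀ v : V, ω v v = 0)
    (hnd : ∀ v : V, (∀ u : V, ω v u = 0) → v = 0)
    (ψ : k → ℂ) (hψ : IsAddChar ψ)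
    (M L : Submodule k V)
    (hMiso : ∀ x ∈ M, ∀ y ∈ M, ω x y = 0) (hMrank : Module.finrank k M = n)
    (hLiso : ∀ x ∈ L, ∀ y ∈ L, ω x y = 0) (hLrank : Module.finrank k L = n)
    (hgen : L ⊔ M = ⊤) :
    (∀ h : V × k, ∃! z : k, ∃ m ∈ M, ∃ l ∈ L,
        h = hMul ω (hMul ω (m, (0 : k)) ((0 : V), z)) (l, (0 : k))) ∧
    (∃ K₀ : V × k → ℂ, K₀ ∈ biModel ω M L ψ ∧
        (∀ z : k, ∀ m ∈ M, ∀ l ∈ L,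
          K₀ (hMul ω (hMul ω (m, (0 : k)) ((0 : V), z)) (l, (0 : k))) = ψ z) ∧
        biModel ω M L ψ = Submodule.span ℂ {K₀} ∧
        Module.finrank ℂ ↥(biModel ω M L ψ) = 1) := by
  obtain ⟨hadd, hne, -⟩ := hψ
  have hdisj : Disjoint L M := by
    rw [disjoint_iff, ← Submodule.finrank_eq_zero (R := k)]
    have h := Submodule.finrank_sup_add_finrank_inf_eq L M
    rw [hgen, finrank_top] at h
    omega
  have huniq : ∀ m ∈ M, ∀ l ∈ L, ∀ m' ∈ M, ∀ l' ∈ L, m + l = m' + l' → m = m' ∧ l = l' := by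
    intro m hm l hl m' hm' l' hl' h
    have h1 : l - l' = m' - m := by
      rw [sub_eq_sub_iff_add_eq_add, add_comm l m, h]
    have h2 : l - l' = 0 :=
      Submodule.disjoint_def.1 hdisj _ (L.sub_mem hl hl') (h1 ▸ M.sub_mem hm' hm)
    have h3 : l = l' := sub_eq_zero.1 h2
    rw [h2] at h1
    exact ⟨(sub_eq_zero.1 h1.symm).symm, h3⟩
  have hform : ∀ (m l : V) (z : k),
      hMul ω (hMul ω (m, (0 : k)) ((0 : V), z)) (l, (0 : k)) =
        (m + l, z + (2 : k)⁻¹ * ω m l) := by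
    intro m l z
    simp [hMul]
  have hbij : ∀ h : V × k, ∃! z : k, ∃ m ∈ M, ∃ l ∈ L,
        h = hMul ω (hMul ω (m, (0 : k)) ((0 : V), z)) (l, (0 : k)) := by
    rintro ⟨v, t⟩
    have hv : v ∈ L ⊔ M := hgen ▸ Submodule.mem_top
    obtain ⟨l, hl, m, hm, rfl⟩ := Submodule.mem_sup.1 hv
    refine ⟨t - (2 : k)⁻¹ * ω m l, ⟨m, hm, l, hl, ?_⟩, ?_⟩
    · rw [hform, sub_add_cancel, add_comm]
    · rintro z ⟨m', hm', l', hl', h⟩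
      rw [hform, Prod.mk.injEq, add_comm] at h
      obtain ⟨rfl, rfl⟩ := huniq m hm l hl m' hm' l' hl' h.1
      rw [h.2, add_sub_cancel_right]
  refine ⟨hbij, ?_⟩
  choose τ hτ hτu using hbij
  have hval : ∀ z : k, ∀ m ∈ M, ∀ l ∈ L,
      τ (hMul ω (hMul ω (m, (0 : k)) ((0 : V), z)) (l, (0 : k))) = z := by
    intro z m hm l hl
    exact (hτu _ z ⟨m, hm, l, hl, rfl⟩).symm
  have hψ0 : ψ 0 = 1 := by
    have h := hadd 0 0
    rw [add_zero] at h
    exact mul_left_cancel₀ (hne 0) (by rw [← h, mul_one])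
  have hmem : (fun h => ψ (τ h)) ∈ biModel ω M L ψ := by
    intro z m hm l hl h
    obtain ⟨m0, hm0, l0, hl0, h0⟩ := hτ h
    have h1 : hMul ω (hMul ω (hMul ω ((0 : V), z) (m, (0 : k))) h) (l, (0 : k)) =
        hMul ω (hMul ω (m + m0, (0 : k)) ((0 : V), z + τ h)) (l0 + l, (0 : k)) := by
      generalize τ h = t at h0
      subst h0
      rw [hform, hform]
      ext
      · simp [hMul, add_assoc]
      · simp [hMul, hMiso m hm m0 hm0, hLiso l0 hl0 l hl]
        ring
    simp only [h1]
    rw [hval _ _ (M.add_mem hm hm0) _ (L.add_mem hl0 hl), hadd]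
  have hspan : biModel ω M L ψ = Submodule.span ℂ {fun h => ψ (τ h)} := by
    apply le_antisymm
    · intro f hf
      rw [Submodule.mem_span_singleton]
      refine ⟨f (0, 0), ?_⟩
      funext h
      obtain ⟨m0, hm0, l0, hl0, h0⟩ := hτ h
      have h2 := hf (τ h) m0 hm0 l0 hl0 (0, 0)
      have h3 : hMul ω (hMul ω (hMul ω ((0 : V), τ h) (m0, (0 : k))) (0, 0)) (l0, (0 : k)) = h := by
        refine Eq.trans ?_ h0.symm
        simp [hMul]
      rw [h3] at h2
      simp only [Pi.smul_apply, smul_eq_mul]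
      rw [h2, mul_comm]
    · rw [Submodule.span_singleton_le_iff_mem]
      exact hmem
  refine ⟨fun h => ψ (τ h), hmem, ?_, hspan, ?_⟩
  · intro z m hm l hl
    simp only [hval z m hm l hl]
  · rw [hspan]
    apply finrank_span_singleton
    intro h
    exact hne _ (congrFun h (0, 0))
end

section
/- Let Sp(V) be the group of linear automorphisms of V preserving ω, acting on H by g·(v,z) = (g v, z), and let (π, ℋ) be the Heisenberg representation with central character ψ. Then there exists a group homomorphism ρ : Sp(V) → GL(ℋ) such that ρ(g) ∘ π((v,z)) ∘ ρ(g)⁻¹ = π((g v, z)) for every g ∈ Sp(V) and (v,z) ∈ H. In particular, over a finite field of odd characteristic the Weil representation exists as a linear (not merely projective) representation of Sp(V). -/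
open scoped BigOperators
attribute [local instance] Classical.propDecidable

variable {k : Type} [Field k] [Fintype k]
variable {V : Type} [AddCommGroup V] [Module k V] [Fintype V]

/-- Axiomatics of the operators `U v = π (v, 0)` of a Heisenberg representation. -/
structure HD {G : Type} [AddCommGroup G] {E : Type} [AddCommGroup E] [Module ℂ E]
    (U : G → Module.End ℂ E) (β : G → G → ℂ) : Prop where
  one : U 0 = 1
  mul : ∀ v w, U v * U w = β v w • U (v + w)
  add_left : ∀ v v' w, β (v + v') w = β v w * β v' w
  symm : ∀ v w, β v w * β w v = 1
  self : ∀ v, β v v = 1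
  nd : ∀ u, u ≠ 0 → ∃ v, β v u * β v u ≠ 1
  irr : ∀ W : Submodule ℂ E, (∀ v, ∀ w ∈ W, U v w ∈ W) → W = ⊥ ∨ W = ⊤

namespace HD

section basic
variable {G : Type} [AddCommGroup G] {E : Type} [AddCommGroup E] [Module ℂ E]
  {U : G → Module.End ℂ E} {β : G → G → ℂ}

lemma ne (h : HD U β) (v w : G) : β v w ≠ 0 := left_ne_zero_of_mul_eq_one (h.symm v w)

lemma symm_inv (h : HD U β) (v w : G) : β v w = (β w v)⁻¹ :=
  eq_inv_of_mul_eq_one_left (h.symm v w)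

lemma add_right (h : HD U β) (v w w' : G) : β v (w + w') = β v w * β v w' := by
  rw [h.symm_inv, h.add_left, mul_inv, ← h.symm_inv, ← h.symm_inv]

lemma zero_left (h : HD U β) (w : G) : β 0 w = 1 := by
  have := h.add_left 0 0 w
  rw [add_zero] at this
  exact (mul_eq_left₀ (h.ne 0 w)).mp this.symm

lemma zero_right (h : HD U β) (w : G) : β w 0 = 1 := by
  rw [h.symm_inv, h.zero_left, inv_one]

lemma neg_left (h : HD U β) (v w : G) : β (-v) w = β w v := by
  rw [h.symm_inv w v]
  apply eq_inv_of_mul_eq_one_left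
  rw [← h.add_left, neg_add_cancel, h.zero_left]

lemma neg_right (h : HD U β) (v w : G) : β v (-w) = β w v := by
  rw [h.symm_inv, h.neg_left, ← h.symm_inv]

lemma mul_neg (h : HD U β) (v : G) : U v * U (-v) = 1 := by
  rw [h.mul, h.neg_right, h.self, one_smul, add_neg_cancel, h.one]

lemma neg_mul (h : HD U β) (v : G) : U (-v) * U v = 1 := by
  rw [h.mul, h.neg_left, h.self, one_smul, neg_add_cancel, h.one]

lemma conj (h : HD U β) (w v : G) : U w * U v * U (-w) = (β w v * β w v) • U v := by
  rw [h.mul, smul_mul_assoc, h.mul, h.neg_right, h.add_right, h.self, smul_smul]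
  congr 2
  · ring
  · abel

lemma trace_zero (h : HD U β) {v : G} (hv : v ≠ 0) : LinearMap.trace ℂ E (U v) = 0 := by
  obtain ⟨w, hw⟩ := h.nd v hv
  have h1 := congrArg (LinearMap.trace ℂ E) (h.conj w v)
  rw [LinearMap.trace_mul_comm, ← mul_assoc, h.neg_mul, one_mul, map_smul, smul_eq_mul] at h1
  by_contra hne
  exact hw ((mul_eq_right₀ hne).mp h1.symm)

lemma sum_beta [Fintype G] (h : HD U β) {u : G} (hu : u ≠ 0) : ∑ v, β v u = 0 := by
  obtain ⟨w, hw⟩ := h.nd u hu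
  have hw1 : β w u ≠ 1 := by
    intro h1; apply hw; rw [h1, one_mul]
  have h2 : ∑ v, β v u = β w u * ∑ v, β v u := by
    rw [Finset.mul_sum]
    simp_rw [← h.add_left]
    exact (Fintype.sum_equiv (Equiv.addLeft w) _ _ (fun _ => rfl)).symm
  by_contra hne
  exact hw1 ((mul_eq_right₀ hne).mp h2.symm)

lemma schur [FiniteDimensional ℂ E] [Nontrivial E] (h : HD U β) (T : Module.End ℂ E)
    (hT : ∀ v, T * U v = U v * T) : ∃ c : ℂ, T = c • 1 := by
  obtain ⟨c, hc⟩ := Module.End.exists_eigenvalue T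
  refine ⟨c, ?_⟩
  rcases h.irr (Module.End.eigenspace T c) (by
    intro v w hw
    rw [Module.End.mem_eigenspace_iff] at hw ⊢
    have := LinearMap.congr_fun (hT v) w
    simp only [Module.End.mul_apply] at this
    rw [this, hw, map_smul]) with h1 | h1
  · exact absurd h1 hc
  · ext x
    have : x ∈ Module.End.eigenspace T c := h1 ▸ Submodule.mem_top
    rw [Module.End.mem_eigenspace_iff] at this
    simpa using this

/-- The (unnormalized) parity operator. -/
noncomputable def par [Fintype G] (U : G → Module.End ℂ E) : Module.End ℂ E := ∑ v, U v

lemma par_sq [Fintype G] (h : HD U β) : par U * par U = (Fintype.card G : ℂ) • 1 := by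
  unfold par
  rw [Finset.sum_mul_sum]
  have h1 : ∀ v : G, ∑ w, U v * U w = ∑ u, β v u • U u := by
    intro v
    refine Fintype.sum_equiv (Equiv.addLeft v) _ _ ?_
    intro w
    simp only [Equiv.coe_addLeft]
    rw [h.mul, h.add_right, h.self, one_mul]
  simp_rw [h1]
  rw [Finset.sum_comm]
  simp_rw [← Finset.sum_smul]
  rw [Finset.sum_eq_single 0]
  · simp [h.zero_right, h.one]
  · intro u _ hu
    rw [h.sum_beta hu, zero_smul]
  · simp

lemma trace_par [Fintype G] [FiniteDimensional ℂ E] (h : HD U β) :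
    LinearMap.trace ℂ E (par U) = Module.finrank ℂ E := by
  unfold par
  rw [map_sum, Finset.sum_eq_single 0]
  · rw [h.one, LinearMap.trace_one]
  · intro u _ hu
    exact h.trace_zero hu
  · simp

/-- Averages give intertwiners. -/
lemma avg_intertw [Fintype G] (h : HD U β) (g : G ≃+ G) (hg : ∀ v w, β (g v) (g w) = β v w)
    (T : Module.End ℂ E) (w : G) :
    (∑ v, U (g v) * T * U (-v)) * U w = U (g w) * ∑ v, U (g v) * T * U (-v) := by
  rw [Finset.sum_mul, Finset.mul_sum]
  refine (Fintype.sum_equiv (Equiv.addLeft w) _ _ ?_).symm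
  intro v
  simp only [Equiv.coe_addLeft]
  rw [mul_assoc _ _ (U w), h.mul (-(w+v)) w, ← mul_assoc, ← mul_assoc, h.mul, hg, map_add,
    h.neg_left, h.add_right, h.self, one_mul, mul_smul_comm, smul_mul_assoc, smul_mul_assoc]
  congr 3
  abel

lemma card_eq [Fintype G] [FiniteDimensional ℂ E] [Nontrivial E] (h : HD U β) :
    (Fintype.card G : ℂ) = (Module.finrank ℂ E : ℂ) * (Module.finrank ℂ E : ℂ) := by
  set d : ℂ := (Module.finrank ℂ E : ℂ) with hd
  have hd0 : d ≠ 0 := by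
    rw [hd]; exact_mod_cast (Module.finrank_pos (R := ℂ) (M := E)).ne'
  have key : ∀ T : Module.End ℂ E,
      d • ∑ v, U v * T * U (-v) = ((Fintype.card G : ℂ) * LinearMap.trace ℂ E T) • 1 := by
    intro T
    obtain ⟨c, hc⟩ := h.schur (∑ v, U v * T * U (-v))
      (fun w => h.avg_intertw (AddEquiv.refl G) (fun _ _ => rfl) T w)
    have h1 := congrArg (LinearMap.trace ℂ E) hc
    rw [map_sum, map_smul, LinearMap.trace_one] at h1
    have h2 : ∀ v, LinearMap.trace ℂ E (U v * T * U (-v)) = LinearMap.trace ℂ E T := by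
      intro v
      rw [LinearMap.trace_mul_comm, ← mul_assoc, h.neg_mul, one_mul]
    simp_rw [h2] at h1
    rw [hc, smul_smul]
    congr 1
    simp only [Finset.sum_const, Finset.card_univ, nsmul_eq_mul, smul_eq_mul] at h1
    rw [h1, mul_comm]
  let b := Module.finBasis ℂ E
  have tr : ∀ f : Module.End ℂ E, LinearMap.trace ℂ E f = ∑ i, b.coord i (f (b i)) := by
    intro f
    rw [LinearMap.trace_eq_matrix_trace ℂ b, Matrix.trace]
    simp [LinearMap.toMatrix_apply]
  have key2 : ∀ i j, d * ∑ v, b.coord i (U v (b i)) * b.coord j (U (-v) (b j))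
      = (Fintype.card G : ℂ) * (if i = j then 1 else 0) := by
    intro i j
    have h1 := key ((b.coord j).smulRight (b i))
    have h2 := congrArg (b.coord i) (LinearMap.congr_fun h1 (b j))
    rw [LinearMap.trace_smulRight] at h2
    simp only [LinearMap.smul_apply, LinearMap.sum_apply, Module.End.mul_apply,
      LinearMap.smulRight_apply, map_smul, map_sum, smul_eq_mul, Module.End.one_apply] at h2
    have h3 : ∀ v, b.coord i (U v (b i)) * b.coord j (U (-v) (b j)) =
      b.coord j (U (-v) (b j)) * b.coord i (U v (b i)) := fun v => mul_comm _ _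
    simp_rw [h3]
    rw [h2]
    by_cases hij : i = j
    · subst hij; simp
    · have : j ≠ i := fun h => hij h.symm
      simp [hij, this]
  have key3 : d * ∑ v, LinearMap.trace ℂ E (U v) * LinearMap.trace ℂ E (U (-v))
      = (Fintype.card G : ℂ) * d := by
    have h4 : ∑ v, LinearMap.trace ℂ E (U v) * LinearMap.trace ℂ E (U (-v)) =
        ∑ i, ∑ j, ∑ v, b.coord i (U v (b i)) * b.coord j (U (-v) (b j)) := by
      simp_rw [tr, Finset.sum_mul_sum]
      rw [Finset.sum_comm]
      exact Finset.sum_congr rfl fun i _ => Finset.sum_comm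
    have h5 : ∀ i, d * ∑ j, ∑ v, b.coord i (U v (b i)) * b.coord j (U (-v) (b j)) =
        (Fintype.card G : ℂ) := by
      intro i
      rw [Finset.mul_sum, Finset.sum_congr rfl (fun j _ => key2 i j)]
      simp
    rw [h4, Finset.mul_sum, Finset.sum_congr rfl (fun i _ => h5 i)]
    simp [hd, mul_comm]
  rw [Finset.sum_eq_single 0] at key3
  · rw [neg_zero, h.one, LinearMap.trace_one, ← hd] at key3
    have := mul_right_cancel₀ hd0 ((mul_comm _ _).trans key3)
    exact this.symm
  · intro v _ hv
    rw [h.trace_zero hv, zero_mul]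
  · simp

lemma exists_intertw [Fintype G] [FiniteDimensional ℂ E] [Nontrivial E] (h : HD U β)
    (g : G ≃+ G) (hg : ∀ v w, β (g v) (g w) = β v w) :
    ∃ A : E ≃ₗ[ℂ] E, ∀ v, (A : Module.End ℂ E) * U v = U (g v) * (A : Module.End ℂ E) := by
  have hne : ∃ T : Module.End ℂ E, ∑ v, U (g v) * T * U (-v) ≠ 0 := by
    by_contra! hall
    obtain ⟨y, hy⟩ := exists_ne (0 : E)
    have hφ : ∃ φ : Module.Dual ℂ E, φ y ≠ 0 := by
      by_contra! hz
      exact hy ((Module.forall_dual_apply_eq_zero_iff ℂ y).mp hz)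
    obtain ⟨φ, hφ⟩ := hφ
    have h1 : ∑ v, φ (U (-v) y) • U (g v) = 0 := by
      ext x
      have := LinearMap.congr_fun (hall (φ.smulRight x)) y
      simpa [LinearMap.sum_apply] using this
    have h2 := congrArg (LinearMap.trace ℂ E) h1
    rw [map_sum, Finset.sum_eq_single 0] at h2
    · rw [neg_zero, map_zero, h.one, map_smul, LinearMap.trace_one, map_zero] at h2
      simp [hφ] at h2
      exact (Module.finrank_pos (R := ℂ) (M := E)).ne' h2
    · intro v _ hv
      rw [map_smul, h.trace_zero (by simpa using hv), smul_zero]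
    · simp
  obtain ⟨T, hT⟩ := hne
  set A := ∑ v, U (g v) * T * U (-v) with hA
  have hint : ∀ w, A * U w = U (g w) * A := h.avg_intertw g hg T
  have hker : LinearMap.ker A = ⊥ := by
    rcases h.irr (LinearMap.ker A) (by
      intro v w hw
      rw [LinearMap.mem_ker] at hw ⊢
      have := LinearMap.congr_fun (hint v) w
      simp only [Module.End.mul_apply] at this
      rw [this, hw, map_zero]) with h1 | h1
    · exact h1
    · exact absurd (LinearMap.ker_eq_top.mp h1) hT
  refine ⟨LinearEquiv.ofInjectiveEndo A (LinearMap.ker_eq_bot.mp hker), fun v => ?_⟩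
  have : ((LinearEquiv.ofInjectiveEndo A (LinearMap.ker_eq_bot.mp hker) : E ≃ₗ[ℂ] E) :
    Module.End ℂ E) = A := by ext x; simp
  rw [this]
  exact hint v

end basic

section det
variable {E : Type} [AddCommGroup E] [Module ℂ E] [FiniteDimensional ℂ E]

lemma det_proj (e : Module.End ℂ E) (he : e * e = e) (c : ℂ) :
    ∃ r : ℕ, LinearMap.trace ℂ E e = r ∧ LinearMap.det (c • e + (1 - e)) = c ^ r := by
  have hp : LinearMap.IsProj (LinearMap.range e) e :=
    (LinearMap.isProj_range_iff_isIdempotentElem e).mpr he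
  refine ⟨Module.finrank ℂ (LinearMap.range e), hp.trace, ?_⟩
  set φ := (LinearMap.range e).prodEquivOfIsCompl (LinearMap.ker e) hp.isCompl with hφ
  have h1 : c • e + (1 - e) = φ.toLinearMap ∘ₗ
      (LinearMap.prodMap (c • LinearMap.id) LinearMap.id) ∘ₗ φ.symm.toLinearMap := by
    rw [← LinearMap.comp_assoc, LinearEquiv.eq_comp_toLinearMap_symm]
    ext x
    · have := hp.map_id x x.2
      simp [hφ, this]
    · simp [hφ]
  rw [h1, LinearMap.det_conj, LinearMap.det_prodMap, LinearMap.det_smul]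
  simp

/-- "Determinant of `A` on the range of `e`". -/
noncomputable def pdet (e A : Module.End ℂ E) : ℂ := LinearMap.det (A * e + (1 - e))

lemma pdet_mul (e A B : Module.End ℂ E) (he : e * e = e) (hB : B * e = e * B) :
    pdet e (A * B) = pdet e A * pdet e B := by
  unfold pdet
  rw [← map_mul]
  congr 1
  have h1 : e * (B * e) = B * e := by rw [hB, ← mul_assoc, he]
  have h2 : A * e * (B * e) = A * B * e := by rw [mul_assoc, h1, mul_assoc]
  rw [add_mul, mul_add, mul_add, mul_sub, mul_sub, sub_mul, sub_mul, h2, h1, mul_assoc A e e, he, one_mul, one_mul, sub_mul, one_mul, he]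
  simp

lemma pdet_one (e : Module.End ℂ E) : pdet e 1 = 1 := by
  simp [pdet]

lemma pdet_ne (e : Module.End ℂ E) (he : e * e = e) (A B : Module.End ℂ E) (hAB : A * B = 1)
    (hB : B * e = e * B) : pdet e A ≠ 0 := by
  apply left_ne_zero_of_mul_eq_one (b := pdet e B)
  rw [← pdet_mul e A B he hB, hAB, pdet_one]

lemma pdet_smul (e A : Module.End ℂ E) (he : e * e = e) (c : ℂ) :
    ∃ r : ℕ, LinearMap.trace ℂ E e = r ∧ pdet e (c • A) = c ^ r * pdet e A := by
  obtain ⟨r, h1, h2⟩ := det_proj e he c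
  refine ⟨r, h1, ?_⟩
  have h3 : c • A = A * (c • 1) := by simp
  rw [h3, pdet_mul e A _ he (by simp), mul_comm, ← h2]
  simp [pdet]

end det

section main
variable {G : Type} [AddCommGroup G] [Fintype G] {E : Type} [AddCommGroup E] [Module ℂ E]
  [FiniteDimensional ℂ E] [Nontrivial E] {U : G → Module.End ℂ E} {β : G → G → ℂ}

/-- Projector on the even part. -/
noncomputable def ep (U : G → Module.End ℂ E) : Module.End ℂ E :=
  (2 : ℂ)⁻¹ • (1 + (Module.finrank ℂ E : ℂ)⁻¹ • par U)

/-- Projector on the odd part. -/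
noncomputable def em (U : G → Module.End ℂ E) : Module.End ℂ E :=
  (2 : ℂ)⁻¹ • (1 - (Module.finrank ℂ E : ℂ)⁻¹ • par U)

lemma npar_sq (h : HD U β) : ((Module.finrank ℂ E : ℂ)⁻¹ • par U) *
    ((Module.finrank ℂ E : ℂ)⁻¹ • par U) = 1 := by
  have hd0 : (Module.finrank ℂ E : ℂ) ≠ 0 := by
    exact_mod_cast (Module.finrank_pos (R := ℂ) (M := E)).ne'
  rw [smul_mul_smul_comm, h.par_sq, h.card_eq, smul_smul]
  rw [show ((Module.finrank ℂ E : ℂ)⁻¹ * (Module.finrank ℂ E : ℂ)⁻¹ *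
    ((Module.finrank ℂ E : ℂ) * (Module.finrank ℂ E : ℂ))) = 1 by field_simp, one_smul]

lemma ep_idem (h : HD U β) : ep U * ep U = ep U := by
  unfold ep
  have := h.npar_sq
  set Q := (Module.finrank ℂ E : ℂ)⁻¹ • par U
  rw [smul_mul_smul_comm, show (1 + Q) * (1 + Q) = 1 + Q + Q + Q * Q by noncomm_ring, this,
    show 1 + Q + Q + 1 = (2 : ℂ) • (1 + Q) by rw [two_smul]; abel, smul_smul]
  norm_num

lemma em_idem (h : HD U β) : em U * em U = em U := by
  unfold em
  have := h.npar_sq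
  set Q := (Module.finrank ℂ E : ℂ)⁻¹ • par U
  rw [smul_mul_smul_comm, show (1 - Q) * (1 - Q) = 1 - Q - Q + Q * Q by noncomm_ring, this,
    show 1 - Q - Q + 1 = (2 : ℂ) • (1 - Q) by rw [two_smul]; abel, smul_smul]
  norm_num

lemma trace_ep (h : HD U β) :
    LinearMap.trace ℂ E (ep U) = LinearMap.trace ℂ E (em U) + 1 := by
  have hd0 : (Module.finrank ℂ E : ℂ) ≠ 0 := by
    exact_mod_cast (Module.finrank_pos (R := ℂ) (M := E)).ne'
  unfold ep em
  simp only [map_smul, map_add, map_sub, h.trace_par, LinearMap.trace_one, smul_eq_mul]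
  field_simp
  ring

/-- Normalized intertwiners. -/
def Good (U : G → Module.End ℂ E) (g : G ≃+ G) (A : E ≃ₗ[ℂ] E) : Prop :=
  (∀ v, (A : Module.End ℂ E) * U v = U (g v) * (A : Module.End ℂ E)) ∧
    pdet (ep U) (A : Module.End ℂ E) = pdet (em U) (A : Module.End ℂ E)

lemma comm_par (g : G ≃+ G) (A : Module.End ℂ E) (hA : ∀ v, A * U v = U (g v) * A) :
    A * par U = par U * A := by
  unfold par
  rw [Finset.mul_sum, Finset.sum_mul]
  exact Fintype.sum_equiv g.toEquiv _ _ (fun v => hA v)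

lemma comm_ep (g : G ≃+ G) (A : Module.End ℂ E) (hA : ∀ v, A * U v = U (g v) * A) :
    A * ep U = ep U * A := by
  unfold ep
  rw [mul_smul_comm, smul_mul_assoc, mul_add, add_mul, mul_smul_comm, smul_mul_assoc,
    comm_par g A hA, one_mul, mul_one]

lemma comm_em (g : G ≃+ G) (A : Module.End ℂ E) (hA : ∀ v, A * U v = U (g v) * A) :
    A * em U = em U * A := by
  unfold em
  rw [mul_smul_comm, smul_mul_assoc, mul_sub, sub_mul, mul_smul_comm, smul_mul_assoc,
    comm_par g A hA, one_mul, mul_one]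

lemma equiv_mul_symm (A : E ≃ₗ[ℂ] E) :
    (A : Module.End ℂ E) * (A.symm : Module.End ℂ E) = 1 := by ext; simp

lemma equiv_symm_mul (A : E ≃ₗ[ℂ] E) :
    (A.symm : Module.End ℂ E) * (A : Module.End ℂ E) = 1 := by ext; simp

lemma comm_symm (A : E ≃ₗ[ℂ] E) (e : Module.End ℂ E)
    (hc : (A : Module.End ℂ E) * e = e * (A : Module.End ℂ E)) :
    (A.symm : Module.End ℂ E) * e = e * (A.symm : Module.End ℂ E) := by
  calc (A.symm : Module.End ℂ E) * e
      = (A.symm : Module.End ℂ E) * (e * (A : Module.End ℂ E)) * (A.symm : Module.End ℂ E) := by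
        rw [mul_assoc, mul_assoc, equiv_mul_symm, mul_one]
    _ = _ := by rw [← hc, ← mul_assoc, equiv_symm_mul, one_mul]

lemma pdet_ratio (h : HD U β) (A : Module.End ℂ E) (c : ℂ) : ∃ r : ℕ,
    pdet (ep U) (c • A) = c * c ^ r * pdet (ep U) A ∧
    pdet (em U) (c • A) = c ^ r * pdet (em U) A := by
  obtain ⟨r, h1, h2⟩ := pdet_smul (ep U) A h.ep_idem c
  obtain ⟨s, h3, h4⟩ := pdet_smul (em U) A h.em_idem c
  have h5 := h.trace_ep
  rw [h1, h3] at h5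
  have h6 : r = s + 1 := by exact_mod_cast h5
  refine ⟨s, ?_, h4⟩
  rw [h2, h6, pow_succ']

lemma good_unique (h : HD U β) (g : G ≃+ G) (A B : E ≃ₗ[ℂ] E)
    (hA : Good U g A) (hB : Good U g B) : A = B := by
  obtain ⟨c, hc⟩ := h.schur ((B.symm : Module.End ℂ E) * (A : Module.End ℂ E)) (by
    intro v
    rw [mul_assoc, hA.1, ← mul_assoc, ← mul_assoc]
    congr 1
    calc (B.symm : Module.End ℂ E) * U (g v)
        = (B.symm : Module.End ℂ E) * (U (g v) * (B : Module.End ℂ E)) *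
          (B.symm : Module.End ℂ E) := by
          rw [mul_assoc, mul_assoc, equiv_mul_symm, mul_one]
      _ = _ := by rw [← hB.1, ← mul_assoc, equiv_symm_mul, one_mul])
  have hAB : (A : Module.End ℂ E) = c • (B : Module.End ℂ E) := by
    have := congrArg (fun X => (B : Module.End ℂ E) * X) hc
    simpa [← mul_assoc, equiv_mul_symm] using this
  obtain ⟨r, h1, h2⟩ := h.pdet_ratio (B : Module.End ℂ E) c
  rw [← hAB] at h1 h2
  have hne : pdet (em U) (A : Module.End ℂ E) ≠ 0 :=
    pdet_ne _ h.em_idem _ _ (equiv_mul_symm A) (comm_symm A _ (comm_em g _ hA.1))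
  have h3 := hA.2
  rw [h1, hB.2, mul_assoc, ← h2] at h3
  have hc1 : c = 1 := (mul_eq_right₀ hne).mp h3
  rw [hc1, one_smul] at hAB
  ext x
  exact LinearMap.congr_fun hAB x

lemma good_exists (h : HD U β) (g : G ≃+ G) (hg : ∀ v w, β (g v) (g w) = β v w) :
    ∃ A, Good U g A := by
  obtain ⟨A, hA⟩ := h.exists_intertw g hg
  have hne : pdet (em U) (A : Module.End ℂ E) ≠ 0 :=
    pdet_ne _ h.em_idem _ _ (equiv_mul_symm A) (comm_symm A _ (comm_em g _ hA))
  have hne' : pdet (ep U) (A : Module.End ℂ E) ≠ 0 :=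
    pdet_ne _ h.ep_idem _ _ (equiv_mul_symm A) (comm_symm A _ (comm_ep g _ hA))
  set c := pdet (em U) (A : Module.End ℂ E) / pdet (ep U) (A : Module.End ℂ E) with hcdef
  have hc : c ≠ 0 := div_ne_zero hne hne'
  have hco : ((LinearEquiv.smulOfNeZero ℂ E c hc * A : E ≃ₗ[ℂ] E) : Module.End ℂ E)
      = c • (A : Module.End ℂ E) := by
    ext x; simp
  refine ⟨LinearEquiv.smulOfNeZero ℂ E c hc * A, ?_, ?_⟩
  · intro v
    rw [hco, smul_mul_assoc, hA, mul_smul_comm]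
  · rw [hco]
    obtain ⟨r, h1, h2⟩ := h.pdet_ratio (A : Module.End ℂ E) c
    rw [h1, h2, mul_right_comm, mul_comm]
    congr 1
    rw [hcdef]
    field_simp

lemma good_mul (h : HD U β) (g g' g'' : G ≃+ G) (hgg : ∀ v, g'' v = g (g' v)) (A B : E ≃ₗ[ℂ] E)
    (hA : Good U g A) (hB : Good U g' B) : Good U g'' (A * B) := by
  have hco : ((A * B : E ≃ₗ[ℂ] E) : Module.End ℂ E) =
    (A : Module.End ℂ E) * (B : Module.End ℂ E) := rfl
  refine ⟨?_, ?_⟩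
  · intro v
    rw [hco, mul_assoc, hB.1, ← mul_assoc, hA.1, hgg, mul_assoc]
  · rw [hco, pdet_mul _ _ _ h.ep_idem (comm_ep g' _ hB.1),
      pdet_mul _ _ _ h.em_idem (comm_em g' _ hB.1), hA.2, hB.2]

end main

end HD

lemma heis_HD
    (ω : V →ₗ[k] V →ₗ[k] k)
    (hchar : ringChar k ≠ 2)
    (halt : ∀ v : V, ω v v = 0)
    (hnd : ∀ v : V, (∀ u : V, ω v u = 0) → v = 0)
    (ψ : k → ℂ) (hψ : IsAddChar ψ)
    (ℋ : Type) [AddCommGroup ℋ] [Module ℂ ℋ]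
    (π : V × k → (ℋ →ₗ[ℂ] ℋ)) (hπ : IsHeisenbergRep ω ψ π) :
    (∀ v z, π (v, z) = ψ z • π (v, 0)) ∧
    HD (fun v => (π (v, 0) : Module.End ℂ ℋ)) (fun v w => ψ ((2 : k)⁻¹ * ω v w)) := by
  obtain ⟨h0, hm, hz, hirr⟩ := hπ
  obtain ⟨hadd, hne, a, ha⟩ := hψ
  have h2 : (2 : k) ≠ 0 := Ring.two_ne_zero hchar
  have hψ0 : ψ 0 = 1 := by
    have := hadd 0 0
    rw [add_zero] at this
    exact (mul_eq_left₀ (hne 0)).mp this.symm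
  have hanti : ∀ v w, ω w v = - ω v w := by
    intro v w
    have := halt (v + w)
    simp only [map_add, LinearMap.add_apply, halt] at this
    linear_combination this
  have hsc : ∀ v z, π (v, z) = ψ z • π (v, 0) := by
    intro v z
    have := hm (0, z) (v, 0)
    rw [hz] at this
    simp only [hMul, zero_add, add_zero, map_zero, LinearMap.zero_apply, mul_zero] at this
    rw [this]
    ext x; simp
  refine ⟨hsc, ?_⟩
  constructor
  · exact h0
  · intro v w
    have := hm (v, 0) (w, 0)
    simp only [hMul, zero_add] at this
    rw [hsc] at this
    exact this.symm
  · intro v v' w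
    simp only [map_add, LinearMap.add_apply, mul_add, hadd]
  · intro v w
    rw [← hadd, hanti v w, mul_neg, add_neg_cancel, hψ0]
  · intro v
    rw [halt, mul_zero, hψ0]
  · intro u hu
    have : ∃ x, ω u x ≠ 0 := by
      by_contra! hall
      exact hu (hnd u hall)
    obtain ⟨x, hx⟩ := this
    refine ⟨(-(a / ω u x)) • x, ?_⟩
    rw [← hadd]
    convert ha using 2
    rw [map_smul, LinearMap.smul_apply, hanti u x, smul_eq_mul]
    field_simp
    ring
  · intro W hW
    apply hirr
    rintro ⟨v, z⟩ w hw
    rw [hsc]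
    exact W.smul_mem _ (hW v w hw)

/-- existence of the linear Weil representation.  There is a group
homomorphism `ρ : Sp(V) → GL(ℋ)` with `ρ(g) ∘ π(h) ∘ ρ(g)⁻¹ = π(g·h)`. -/
theorem weil_representation_exists
    (ω : V →ₗ[k] V →ₗ[k] k) (n : ℕ)
    (hchar : ringChar k ≠ 2)
    (hdim : Module.finrank k V = 2 * n)
    (halt : ∀ v : V, ω v v = 0)
    (hnd : ∀ v : V, (∀ u : V, ω v u = 0) → v = 0)
    (ψ : k → ℂ) (hψ : IsAddChar ψ)
    (ℋ : Type) [AddCommGroup ℋ] [Module ℂ ℋ] [FiniteDimensional ℂ ℋ] [Nontrivial ℋ]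
    (π : V × k → (ℋ →ₗ[ℂ] ℋ)) (hπ : IsHeisenbergRep ω ψ π) :
    ∃ ρ : ↥(Sp ω) →* (ℋ ≃ₗ[ℂ] ℋ),
      ∀ (g : Sp ω) (v : V) (z : k) (x : ℋ),
        ρ g (π (v, z) ((ρ g)⁻¹ x)) = π ((g : V ≃ₗ[k] V) v, z) x := by
  obtain ⟨hsc, h⟩ := heis_HD ω hchar halt hnd ψ hψ ℋ π hπ
  have hex : ∀ g : Sp ω, ∃ A, HD.Good (fun v => (π (v, 0) : Module.End ℂ ℋ))
      ((g : V ≃ₗ[k] V).toAddEquiv) A := by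
    intro g
    apply h.good_exists
    intro v w
    exact congrArg (fun t => ψ ((2 : k)⁻¹ * t)) (g.2 v w)
  choose r hr using hex
  refine ⟨MonoidHom.mk' r ?_, ?_⟩
  · intro a b
    apply h.good_unique _ _ _ (hr (a * b))
    exact h.good_mul _ _ _ (fun v => rfl) _ _ (hr a) (hr b)
  · intro g v z x
    have h1 := LinearMap.congr_fun ((hr g).1 v) ((r g)⁻¹ x)
    have h2 : r g ((r g)⁻¹ x) = x := (r g).apply_symm_apply x
    simp only [Module.End.mul_apply, LinearEquiv.coe_coe, h2] at h1
    rw [hsc v z, hsc ((g : V ≃ₗ[k] V) v) z]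
    simp only [MonoidHom.mk'_apply, LinearMap.smul_apply, map_smul]
    rw [h1]
    rfl
end

section
/- Let g ∈ Sp(V) act on H by g·(v,z) = (g v, z) and on oriented Lagrangians by g·(L, o_L) = (gL, (Λⁿ g)(o_L)). For a Lagrangian L, let g_* : ℂ(L\H, ψ) → ℂ(gL\H, ψ) be the isomorphism (g_* f)(h) = f(g⁻¹·h). Then for any oriented Lagrangians M° = (M, o_M), L° = (L, o_L) with L + M = V: (i) A_{g·M°, g·L°} = A_{M°,L°}; (ii) g_* ∘ F_{M°,L°} = F_{g·M°, g·L°} ∘ g_*; and hence g_* ∘ (A_{M°,L°}·F_{M°,L°}) = (A_{g·M°,g·L°}·F_{g·M°,g·L°}) ∘ g_* (Sp(V)-equivariance of the canonical intertwining operators on general-position pairs). -/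
open scoped BigOperators
attribute [local instance] Classical.propDecidable

variable {k : Type} [Field k] [Fintype k]
variable {V : Type} [AddCommGroup V] [Module k V] [Fintype V]

/-- `Sp(V)`-equivariance of the canonical intertwining operators on pairs of
oriented Lagrangians in general position: the normalization coefficients are invariant and
`g_* ∘ F_{M°,L°} = F_{g·M°,g·L°} ∘ g_*`. -/
theorem sp_equivariance
    (ω : V →ₗ[k] V →ₗ[k] k) (n : ℕ)
    (hchar : ringChar k ≠ 2)
    (hdim : Module.finrank k V = 2 * n)
    (halt : ∀ v : V, ω v v = 0)
    (hnd : ∀ v : V, (∀ u : V, ω v u = 0) → v = 0)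
    (ψ : k → ℂ) (hψ : IsAddChar ψ)
    (g : V ≃ₗ[k] V) (hg : ∀ u v : V, ω (g u) (g v) = ω u v)
    (M L : Submodule k V) (bM : Module.Basis (Fin n) k M) (bL : Module.Basis (Fin n) k L)
    (hMiso : ∀ x ∈ M, ∀ y ∈ M, ω x y = 0) (hMrank : Module.finrank k M = n)
    (hLiso : ∀ x ∈ L, ∀ y ∈ L, ω x y = 0) (hLrank : Module.finrank k L = n)
    (hgen : L ⊔ M = ⊤) :
    Acoef ω ψ n (bM.map (g.submoduleMap M)) (bL.map (g.submoduleMap L)) =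
        Acoef ω ψ n bM bL ∧
    (∀ f ∈ model ω L ψ,
        gstar g (avg ω M f) = avg ω (M.map (g : V →ₗ[k] V)) (gstar g f)) ∧
    (∀ f ∈ model ω L ψ,
        gstar g (Acoef ω ψ n bM bL • avg ω M f) =
          Acoef ω ψ n (bM.map (g.submoduleMap M)) (bL.map (g.submoduleMap L)) •
            avg ω (M.map (g : V →ₗ[k] V)) (gstar g f)) := by
  have hA : Acoef ω ψ n (bM.map (g.submoduleMap M)) (bL.map (g.submoduleMap L)) =
      Acoef ω ψ n bM bL := by
    simp [Acoef, hg]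
  have hF : ∀ f : V × k → ℂ,
      gstar g (avg ω M f) = avg ω (M.map (g : V →ₗ[k] V)) (gstar g f) := by
    intro f
    funext x
    simp only [gstar, avg, LinearMap.coe_mk, AddHom.coe_mk]
    refine Fintype.sum_equiv (g.submoduleMap M).toEquiv _ _ ?_
    intro m
    have h := hg (m : V) (g.symm x.1)
    rw [LinearEquiv.apply_symm_apply] at h
    simp [hMul, h]
  refine ⟨hA, fun f _ => hF f, fun f _ => ?_⟩
  rw [hA, ← hF f]
  rfl
end

section
/- Let (π, ℋ) be the Heisenberg representation with central character ψ and let ρ : Sp(V) → GL(ℋ) be a group homomorphism satisfying ρ(g) ∘ π(h) ∘ ρ(g)⁻¹ = π(g·h) for all g ∈ Sp(V), h ∈ H. Define the kernel K : Sp(V) × V → ℂ by K(g, v) = (dim ℋ)⁻¹ · Tr(ρ(g) ∘ π((v,0))⁻¹). Then for every g ∈ Sp(V) one has the inversion formula Σ_{v∈V} K(g, v) · π((v,0)) = ρ(g); i.e., the kernel K determines the Weil representation completely. -/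
open scoped BigOperators
attribute [local instance] Classical.propDecidable

variable {k : Type} [Field k] [Fintype k]
variable {V : Type} [AddCommGroup V] [Module k V] [Fintype V]

/-- Orthogonality: the sum of `ψ (ω v u)` over `v` vanishes for `u ≠ 0`. -/
theorem weilAux_sum_char (ω : V →ₗ[k] V →ₗ[k] k)
    (halt : ∀ v : V, ω v v = 0)
    (hnd : ∀ v : V, (∀ u : V, ω v u = 0) → v = 0)
    (ψ : k → ℂ) (hψ : IsAddChar ψ) (u : V) (hu : u ≠ 0) :
    ∑ v : V, ψ (ω v u) = 0 := by
  have hskew : ∀ a b : V, ω a b = - ω b a := by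
    intro a b
    have h := halt (a + b)
    simp only [map_add, LinearMap.add_apply, halt, zero_add, add_zero] at h
    linear_combination h
  obtain ⟨hadd, -, a, ha⟩ := hψ
  obtain ⟨w, hw⟩ : ∃ w, ω u w ≠ 0 := by
    by_contra hcon
    push Not at hcon
    exact hu (hnd u hcon)
  have hw' : ω w u ≠ 0 := by rw [hskew]; simpa using hw
  have hv0 : ω ((a * (ω w u)⁻¹) • w) u = a := by
    simp [mul_assoc, inv_mul_cancel₀ hw']
  have h1 : ∑ v : V, ψ (ω (v + (a * (ω w u)⁻¹) • w) u) = ∑ v : V, ψ (ω v u) :=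
    Fintype.sum_equiv (Equiv.addRight ((a * (ω w u)⁻¹) • w)) _ _ (fun _ => rfl)
  have h2 : (∑ v : V, ψ (ω v u)) * ψ a = ∑ v : V, ψ (ω v u) := by
    rw [Finset.sum_mul]
    refine Eq.trans ?_ h1
    refine Finset.sum_congr rfl fun v _ => ?_
    rw [map_add, LinearMap.add_apply, hv0, hadd]
  have h3 : (∑ v : V, ψ (ω v u)) * (ψ a - 1) = 0 := by
    rw [mul_sub, h2, mul_one, sub_self]
  exact (mul_eq_zero.mp h3).resolve_right (sub_ne_zero.mpr ha)

/-- Schur's lemma for a Heisenberg representation. -/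
theorem weilAux_schur (ω : V →ₗ[k] V →ₗ[k] k) (ψ : k → ℂ)
    (ℋ : Type) [AddCommGroup ℋ] [Module ℂ ℋ] [FiniteDimensional ℂ ℋ] [Nontrivial ℋ]
    (π : V × k → (ℋ →ₗ[ℂ] ℋ)) (hπ : IsHeisenbergRep ω ψ π)
    (S : Module.End ℂ ℋ) (hS : ∀ x : V × k, ∀ w : ℋ, S (π x w) = π x (S w)) :
    S = ((Module.finrank ℂ ℋ : ℂ)⁻¹ * LinearMap.trace ℂ ℋ S) • LinearMap.id := by
  obtain ⟨μ, hμ⟩ := Module.End.exists_eigenvalue S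
  have htop : Module.End.eigenspace S μ = ⊤ := by
    refine (hπ.2.2.2 (Module.End.eigenspace S μ) ?_).resolve_left hμ
    intro x w hw
    rw [Module.End.mem_eigenspace_iff] at hw ⊢
    rw [hS, hw, map_smul]
  have hSμ : S = μ • LinearMap.id := by
    ext w
    have : w ∈ Module.End.eigenspace S μ := by rw [htop]; trivial
    rw [Module.End.mem_eigenspace_iff] at this
    simpa using this
  have hd : (Module.finrank ℂ ℋ : ℂ) ≠ 0 := by
    exact_mod_cast (Module.finrank_pos (R := ℂ) (M := ℋ)).ne'
  have htr : LinearMap.trace ℂ ℋ S = μ * (Module.finrank ℂ ℋ : ℂ) := by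
    rw [hSμ, map_smul, LinearMap.trace_id, smul_eq_mul]
  rw [htr, mul_comm μ, inv_mul_cancel_left₀ hd]
  exact hSμ

/-- The inversion formula for an arbitrary endomorphism. -/
theorem weilAux_inversion
    (ω : V →ₗ[k] V →ₗ[k] k)
    (hchar : ringChar k ≠ 2)
    (halt : ∀ v : V, ω v v = 0)
    (hnd : ∀ v : V, (∀ u : V, ω v u = 0) → v = 0)
    (ψ : k → ℂ) (hψ : IsAddChar ψ)
    (ℋ : Type) [AddCommGroup ℋ] [Module ℂ ℋ] [FiniteDimensional ℂ ℋ] [Nontrivial ℋ]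
    (π : V × k → (ℋ →ₗ[ℂ] ℋ)) (hπ : IsHeisenbergRep ω ψ π)
    (A : Module.End ℂ ℋ) :
    ∑ v : V, ((Module.finrank ℂ ℋ : ℂ)⁻¹ *
      LinearMap.trace ℂ ℋ (A ∘ₗ π (-v, (0 : k)))) • π (v, (0 : k)) = A := by
  have hskew : ∀ a b : V, ω a b = - ω b a := by
    intro a b
    have h := halt (a + b)
    simp only [map_add, LinearMap.add_apply, halt, zero_add, add_zero] at h
    linear_combination h
  have h2 : (2 : k) ≠ 0 := Ring.two_ne_zero hchar
  have hπ' := hπ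
  obtain ⟨hone, hmul, hcen, -⟩ := hπ'
  have hψ0 : ψ 0 = 1 := by
    have h := hψ.1 0 0
    rw [add_zero] at h
    exact (mul_right_cancel₀ (hψ.2.1 0) (by rw [one_mul]; exact h)).symm
  have hV : (Fintype.card V : ℂ) ≠ 0 := by
    exact_mod_cast Fintype.card_ne_zero
  have hz : ∀ (v : V) (z : k) (x : ℋ), π (v, z) x = ψ z • π (v, 0) x := by
    intro v z x
    have h := hmul (0, z) (v, 0)
    simp only [hMul, zero_add, add_zero, map_zero, LinearMap.zero_apply, mul_zero] at h
    rw [h, hcen]; rfl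
  have hm : ∀ (u v : V) (x : ℋ),
      π (u, 0) (π (v, 0) x) = ψ ((2 : k)⁻¹ * ω u v) • π (u + v, 0) x := by
    intro u v x
    have h := hmul (u, 0) (v, 0)
    simp only [hMul, zero_add] at h
    rw [← hz, h]; rfl
  have hinv : ∀ (v : V) (x : ℋ), π (-v, 0) (π (v, 0) x) = x := by
    intro v x
    rw [hm]; simp [halt, hψ0, hone]
  have hψinv : ∀ z : k, ψ z * ψ (-z) = 1 := by
    intro z; rw [← hψ.1]; simp [hψ0]
  -- averaging
  have havg : ∀ B : Module.End ℂ ℋ, ∀ y : ℋ,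
      ∑ u : V, π (u, 0) (B (π (-u, 0) y)) =
        ((Fintype.card V : ℂ) * ((Module.finrank ℂ ℋ : ℂ)⁻¹ * LinearMap.trace ℂ ℋ B)) • y := by
    intro B y
    let S : Module.End ℂ ℋ := ∑ u : V, (π (u, 0)) ∘ₗ B ∘ₗ (π (-u, 0))
    have hSapp : ∀ y, S y = ∑ u : V, π (u, 0) (B (π (-u, 0) y)) := by
      intro y; simp [S, LinearMap.sum_apply]
    have hScomm0 : ∀ (w : V) (x : ℋ), S (π (w, 0) x) = π (w, 0) (S x) := by
      intro w x
      rw [hSapp, hSapp, map_sum]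
      symm
      refine Fintype.sum_equiv (Equiv.addLeft w) _ _ fun u => ?_
      have e1 : -(w + u) + w = -u := by abel
      have e2 : (2 : k)⁻¹ * ω (-(w + u)) w = (2 : k)⁻¹ * ω w u := by
        rw [map_neg, LinearMap.neg_apply, map_add, LinearMap.add_apply, halt, zero_add,
          hskew w u]
      simp only [Equiv.coe_addLeft]
      rw [hm w u, hm (-(w + u)) w, e1, e2, map_smul, map_smul]
    have hScomm : ∀ x : V × k, ∀ w : ℋ, S (π x w) = π x (S w) := by
      rintro ⟨v, z⟩ w
      rw [hz v z w, hz v z (S w), map_smul, hScomm0]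
    have hsch := weilAux_schur ω ψ ℋ π hπ S hScomm
    have htr : LinearMap.trace ℂ ℋ S = (Fintype.card V : ℂ) * LinearMap.trace ℂ ℋ B := by
      have : ∀ u : V, LinearMap.trace ℂ ℋ ((π (u, 0)) ∘ₗ B ∘ₗ (π (-u, 0)))
          = LinearMap.trace ℂ ℋ B := by
        intro u
        have h1 := LinearMap.trace_mul_comm ℂ (π (u, 0)) (B ∘ₗ (π (-u, 0)))
        have h2 : (B ∘ₗ (π (-u, 0))) * π (u, 0) = B := by
          ext x
          simp [hinv]
        rw [h2] at h1
        exact h1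
      simp only [S, map_sum, this]
      simp
    rw [← hSapp]
    conv_lhs => rw [hsch]
    rw [htr, LinearMap.smul_apply, LinearMap.id_apply]
    congr 1; ring
  ext x
  have hkey : (Fintype.card V : ℂ) • (∑ v : V, ((Module.finrank ℂ ℋ : ℂ)⁻¹ *
      LinearMap.trace ℂ ℋ (A ∘ₗ π (-v, (0 : k)))) • π (v, (0 : k))) x
        = (Fintype.card V : ℂ) • A x := by
    rw [LinearMap.sum_apply, Finset.smul_sum]
    have step : ∀ v : V, (Fintype.card V : ℂ) • (((Module.finrank ℂ ℋ : ℂ)⁻¹ *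
      LinearMap.trace ℂ ℋ (A ∘ₗ π (-v, (0 : k)))) • π (v, (0 : k))) x
        = ∑ u : V, ψ (ω v u) • π (u, 0) (A (π (-u, 0) x)) := by
      intro v
      rw [LinearMap.smul_apply, smul_smul, ← havg]
      refine Finset.sum_congr rfl fun u _ => ?_
      have e1 : -v + (-u + v) = -u := by abel
      have e2 : (2 : k)⁻¹ * ω (-u) v + (2 : k)⁻¹ * ω (-v) (-u + v) = ω v u := by
        simp only [map_neg, map_add, LinearMap.neg_apply, halt]
        rw [hskew u v]
        field_simp
        ring
      rw [LinearMap.comp_apply, hm (-u) v, map_smul, hm (-v), smul_smul, e1, ← hψ.1, e2,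
        map_smul, map_smul]
    simp only [step]
    rw [Finset.sum_comm]
    simp only [← Finset.sum_smul]
    rw [Finset.sum_eq_single (0 : V)]
    · simp [hψ0, hone]
    · intro u _ hu
      rw [weilAux_sum_char ω halt hnd ψ hψ u hu, zero_smul]
    · simp
  exact smul_right_injective ℋ hV hkey

/-- the kernel `K(g,v) = (dim ℋ)⁻¹·Tr(ρ(g) ∘ π((v,0))⁻¹)` of the Weil
representation satisfies the inversion formula `∑_v K(g,v)·π((v,0)) = ρ(g)`. -/
theorem weil_kernel_inversion
    (ω : V →ₗ[k] V →ₗ[k] k) (n : ℕ)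
    (hchar : ringChar k ≠ 2)
    (hdim : Module.finrank k V = 2 * n)
    (halt : ∀ v : V, ω v v = 0)
    (hnd : ∀ v : V, (∀ u : V, ω v u = 0) → v = 0)
    (ψ : k → ℂ) (hψ : IsAddChar ψ)
    (ℋ : Type) [AddCommGroup ℋ] [Module ℂ ℋ] [FiniteDimensional ℂ ℋ] [Nontrivial ℋ]
    (π : V × k → (ℋ →ₗ[ℂ] ℋ)) (hπ : IsHeisenbergRep ω ψ π)
    (ρ : ↥(Sp ω) →* (ℋ ≃ₗ[ℂ] ℋ))
    (hρ : ∀ (g : Sp ω) (v : V) (z : k) (x : ℋ),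
      ρ g (π (v, z) ((ρ g)⁻¹ x)) = π ((g : V ≃ₗ[k] V) v, z) x)
    (K : ↥(Sp ω) → V → ℂ)
    (hK : ∀ (g : Sp ω) (v : V),
      K g v = (Module.finrank ℂ ℋ : ℂ)⁻¹ *
        LinearMap.trace ℂ ℋ ((ρ g).toLinearMap ∘ₗ π (hInv ω (v, (0 : k))))) :
    ∀ g : Sp ω, ∑ v : V, K g v • π (v, (0 : k)) = (ρ g).toLinearMap := by
  intro g
  have h := weilAux_inversion ω hchar halt hnd ψ hψ ℋ π hπ (ρ g).toLinearMap
  rw [← h]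
  refine Finset.sum_congr rfl fun v _ => ?_
  rw [hK]
  simp [hInv, halt]
end

section
/- Let (π, ℋ) be the Heisenberg representation with central character ψ and let ρ : Sp(V) → GL(ℋ) be a group homomorphism satisfying ρ(g) ∘ π(h) ∘ ρ(g)⁻¹ = π(g·h) for all g ∈ Sp(V), h ∈ H, with kernel K(g, v) = (dim ℋ)⁻¹ · Tr(ρ(g) ∘ π((v,0))⁻¹). Then K satisfies the convolution property: for all g₁, g₂ ∈ Sp(V) and v ∈ V, Σ_{u∈V} K(g₁, u) · K(g₂, v − u) · ψ((1/2)·ω(u, v)) = K(g₁g₂, v); i.e., K(g₁,·) ∗ K(g₂,·) = K(g₁g₂,·) for the twisted convolution on ℂ(V) induced from convolution on the Heisenberg group. -/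
open scoped BigOperators
attribute [local instance] Classical.propDecidable

variable {k : Type} [Field k] [Fintype k]
variable {V : Type} [AddCommGroup V] [Module k V] [Fintype V]

theorem wk_skew (ω : V →ₗ[k] V →ₗ[k] k) (halt : ∀ v : V, ω v v = 0) (u v : V) :
    ω u v = - ω v u := by
  have h := halt (u + v)
  simp only [map_add, LinearMap.add_apply, halt, zero_add, add_zero] at h
  linear_combination h

theorem wk_orth (ω : V →ₗ[k] V →ₗ[k] k) (halt : ∀ v : V, ω v v = 0)
    (hnd : ∀ v : V, (∀ u : V, ω v u = 0) → v = 0)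
    (ψ : k → ℂ) (hψ : IsAddChar ψ) (w : V) (hw : w ≠ 0) :
    ∑ v : V, ψ (ω v w) = 0 := by
  obtain ⟨hadd, -, a, ha⟩ := hψ
  have : ∃ u, ω w u ≠ 0 := by
    by_contra hcon
    push Not at hcon
    exact hw (hnd w hcon)
  obtain ⟨u, hu⟩ := this
  have hu' : ω u w ≠ 0 := by
    rw [wk_skew ω halt]; exact neg_ne_zero.mpr hu
  have h0 : ω ((a / ω u w) • u) w = a := by
    simp [hu']
  have h1 : ∑ v : V, ψ (ω (v + (a / ω u w) • u) w) = ∑ v : V, ψ (ω v w) :=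
    Fintype.sum_equiv (Equiv.addRight ((a / ω u w) • u)) _ _ (fun v => rfl)
  simp only [map_add, LinearMap.add_apply] at h1
  rw [LinearMap.map_smul, LinearMap.smul_apply] at h0
  simp only [LinearMap.map_smul, LinearMap.smul_apply, h0, hadd] at h1
  rw [← Finset.sum_mul] at h1
  have h2 : (∑ v : V, ψ (ω v w)) * (ψ a - 1) = 0 := by linear_combination h1
  exact (mul_eq_zero.mp h2).resolve_right (sub_ne_zero.mpr ha)

theorem wk_mul (ω : V →ₗ[k] V →ₗ[k] k) (ψ : k → ℂ)
    {ℋ : Type} [AddCommGroup ℋ] [Module ℂ ℋ]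
    (π : V × k → (ℋ →ₗ[ℂ] ℋ)) (hπ : IsHeisenbergRep ω ψ π) (u v : V) :
    (π (u, 0) * π (v, 0) : Module.End ℂ ℋ)
      = ψ ((2 : k)⁻¹ * ω u v) • (π (u + v, 0) : Module.End ℂ ℋ) := by
  obtain ⟨-, hm, hz, -⟩ := hπ
  have h1 := hm (u, 0) (v, 0)
  have h2 := hm (0, (2 : k)⁻¹ * ω u v) (u + v, 0)
  rw [hz] at h2
  simp only [hMul, zero_add, add_zero, map_zero, LinearMap.zero_apply, mul_zero] at h1 h2
  rw [Module.End.mul_eq_comp, ← h1, h2, LinearMap.smul_comp, LinearMap.id_comp]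

theorem wk_central (ω : V →ₗ[k] V →ₗ[k] k) (ψ : k → ℂ)
    {ℋ : Type} [AddCommGroup ℋ] [Module ℂ ℋ]
    (π : V × k → (ℋ →ₗ[ℂ] ℋ)) (hπ : IsHeisenbergRep ω ψ π) (v : V) (z : k) :
    (π (v, z) : Module.End ℂ ℋ) = ψ z • (π (v, 0) : Module.End ℂ ℋ) := by
  obtain ⟨-, hm, hz, -⟩ := hπ
  have h2 := hm (0, z) (v, 0)
  rw [hz] at h2
  simp only [hMul, zero_add, add_zero, map_zero, LinearMap.zero_apply, mul_zero] at h2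
  rw [h2, LinearMap.smul_comp, LinearMap.id_comp]

theorem wk_schur (ω : V →ₗ[k] V →ₗ[k] k) (ψ : k → ℂ)
    {ℋ : Type} [AddCommGroup ℋ] [Module ℂ ℋ] [FiniteDimensional ℂ ℋ] [Nontrivial ℋ]
    (π : V × k → (ℋ →ₗ[ℂ] ℋ)) (hπ : IsHeisenbergRep ω ψ π) (T : Module.End ℂ ℋ)
    (hT : ∀ v : V, T * (π (v, 0) : Module.End ℂ ℋ) = (π (v, 0) : Module.End ℂ ℋ) * T) :
    ∃ c : ℂ, T = c • (1 : Module.End ℂ ℋ) := by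
  obtain ⟨c, hc⟩ := Module.End.exists_eigenvalue T
  refine ⟨c, ?_⟩
  have hirr := hπ.2.2.2 (T.eigenspace c) (by
    rintro ⟨v, z⟩ w hw
    rw [Module.End.mem_eigenspace_iff] at hw ⊢
    rw [wk_central ω ψ π hπ v z]
    have h := LinearMap.congr_fun (hT v) w
    simp only [Module.End.mul_apply, hw, map_smul] at h
    simp only [LinearMap.smul_apply, map_smul, h]
    rw [smul_comm])
  have htop := hirr.resolve_left hc
  ext x
  have : x ∈ T.eigenspace c := by rw [htop]; trivial
  rw [Module.End.mem_eigenspace_iff] at this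
  simpa using this

theorem wk_avg (ω : V →ₗ[k] V →ₗ[k] k) (halt : ∀ v : V, ω v v = 0)
    (ψ : k → ℂ) (hψ : IsAddChar ψ)
    {ℋ : Type} [AddCommGroup ℋ] [Module ℂ ℋ] [FiniteDimensional ℂ ℋ] [Nontrivial ℋ]
    (π : V × k → (ℋ →ₗ[ℂ] ℋ)) (hπ : IsHeisenbergRep ω ψ π) (B : Module.End ℂ ℋ) :
    (Fintype.card V : ℂ) • (LinearMap.trace ℂ ℋ B) • (1 : Module.End ℂ ℋ) =
      (Module.finrank ℂ ℋ : ℂ) •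
        ∑ w : V, ((π (w, 0) : Module.End ℂ ℋ) * B * (π (-w, 0) : Module.End ℂ ℋ)) := by
  have hψ0 : ψ 0 = 1 := by
    have h := hψ.1 0 0
    rw [add_zero] at h
    have := hψ.2.1 0
    field_simp at h
    exact h.symm
  have hP0 : (π (0, 0) : Module.End ℂ ℋ) = 1 := hπ.1
  have hm := wk_mul ω ψ π hπ
  have hinv : ∀ w : V, (π (-w, 0) : Module.End ℂ ℋ) * (π (w, 0) : Module.End ℂ ℋ) = 1 := by
    intro w
    rw [hm]; simp [halt, hψ0, hP0]
  set T : Module.End ℂ ℋ :=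
    ∑ w : V, ((π (w, 0) : Module.End ℂ ℋ) * B * (π (-w, 0) : Module.End ℂ ℋ)) with hTdef
  have hcomm : ∀ v : V, T * (π (v, 0) : Module.End ℂ ℋ) = (π (v, 0) : Module.End ℂ ℋ) * T := by
    intro v
    rw [hTdef, Finset.sum_mul, Finset.mul_sum]
    symm
    apply Fintype.sum_equiv (Equiv.addLeft v)
    intro w
    simp only [Equiv.coe_addLeft]
    rw [← mul_assoc, ← mul_assoc, hm v w, mul_assoc (_ * B), hm]
    have e : -(v + w) + v = -w := by abel
    have e2 : ω (-(v + w)) v = ω v w := by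
      rw [wk_skew ω halt v w]; simp [halt]
    rw [e, e2]
    simp only [smul_mul_assoc, mul_smul_comm]
  obtain ⟨c, hc⟩ := wk_schur ω ψ π hπ T hcomm
  have htr : LinearMap.trace ℂ ℋ T = (Fintype.card V : ℂ) * LinearMap.trace ℂ ℋ B := by
    rw [hTdef, map_sum]
    have : ∀ w : V, LinearMap.trace ℂ ℋ
        ((π (w, 0) : Module.End ℂ ℋ) * B * (π (-w, 0) : Module.End ℂ ℋ))
          = LinearMap.trace ℂ ℋ B := by
      intro w
      rw [LinearMap.trace_mul_comm, ← mul_assoc, hinv, one_mul]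
    simp [this]
  rw [hc] at htr
  rw [map_smul, LinearMap.trace_one, smul_eq_mul] at htr
  rw [hc, smul_smul, smul_smul, ← htr, mul_comm]

theorem wk_expand (ω : V →ₗ[k] V →ₗ[k] k) (h2 : (2 : k) ≠ 0) (halt : ∀ v : V, ω v v = 0)
    (hnd : ∀ v : V, (∀ u : V, ω v u = 0) → v = 0)
    (ψ : k → ℂ) (hψ : IsAddChar ψ)
    {ℋ : Type} [AddCommGroup ℋ] [Module ℂ ℋ] [FiniteDimensional ℂ ℋ] [Nontrivial ℋ]
    (π : V × k → (ℋ →ₗ[ℂ] ℋ)) (hπ : IsHeisenbergRep ω ψ π) (A : Module.End ℂ ℋ) :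
    ∑ v : V, (LinearMap.trace ℂ ℋ (A * (π (-v, 0) : Module.End ℂ ℋ))) •
        (π (v, 0) : Module.End ℂ ℋ) = (Module.finrank ℂ ℋ : ℂ) • A := by
  have hψ0 : ψ 0 = 1 := by
    have h := hψ.1 0 0
    rw [add_zero] at h
    have := hψ.2.1 0
    field_simp at h
    exact h.symm
  have hP0 : (π (0, 0) : Module.End ℂ ℋ) = 1 := hπ.1
  have hm := wk_mul ω ψ π hπ
  have hcard : (Fintype.card V : ℂ) ≠ 0 := by
    exact_mod_cast Fintype.card_ne_zero
  have hconj : ∀ v w : V, (π (-v, 0) : Module.End ℂ ℋ) * (π (-w, 0) : Module.End ℂ ℋ) *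
      (π (v, 0) : Module.End ℂ ℋ) = ψ (ω v w) • (π (-w, 0) : Module.End ℂ ℋ) := by
    intro v w
    rw [hm, smul_mul_assoc, hm, smul_smul, ← hψ.1]
    have e : -v + -w + v = -w := by abel
    have e2 : ω (-v + -w) v = ω v w := by
      rw [wk_skew ω halt v w]; simp [halt]
    rw [e, e2]
    congr 2
    simp only [map_neg, LinearMap.neg_apply, neg_neg]
    field_simp
    ring
  apply smul_right_injective (Module.End ℂ ℋ) hcard
  simp only
  rw [Finset.smul_sum]
  have step : ∀ v : V, (Fintype.card V : ℂ) •
      (LinearMap.trace ℂ ℋ (A * (π (-v, 0) : Module.End ℂ ℋ))) • (π (v, 0) : Module.End ℂ ℋ)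
      = (Module.finrank ℂ ℋ : ℂ) • ∑ w : V, ψ (ω v w) •
        ((π (w, 0) : Module.End ℂ ℋ) * A * (π (-w, 0) : Module.End ℂ ℋ)) := by
    intro v
    have h := congrArg (fun X : Module.End ℂ ℋ => X * (π (v, 0) : Module.End ℂ ℋ))
      (wk_avg ω halt ψ hψ π hπ (A * (π (-v, 0) : Module.End ℂ ℋ)))
    simp only [smul_mul_assoc, one_mul, Finset.sum_mul] at h
    rw [h]
    congr 1
    apply Finset.sum_congr rfl
    intro w _
    rw [← mul_smul_comm, ← hconj]
    simp only [mul_assoc]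
  rw [Finset.sum_congr rfl (fun v _ => step v), ← Finset.smul_sum, Finset.sum_comm]
  simp only [← Finset.sum_smul]
  rw [Finset.sum_eq_single (0 : V)]
  · simp only [map_zero, hψ0, neg_zero, hP0, one_mul, mul_one, Finset.sum_const,
      Finset.card_univ, nsmul_eq_mul]
    rw [smul_comm]
  · intro w _ hw
    rw [wk_orth ω halt hnd ψ hψ w hw, zero_smul]
  · intro h
    exact absurd (Finset.mem_univ _) h

/-- the kernel of the Weil representation satisfies the convolution property
`K(g₁,·) ∗ K(g₂,·) = K(g₁g₂,·)` for the twisted convolution on `ℂ(V)`. -/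
theorem weil_kernel_convolution
    (ω : V →ₗ[k] V →ₗ[k] k) (n : ℕ)
    (hchar : ringChar k ≠ 2)
    (hdim : Module.finrank k V = 2 * n)
    (halt : ∀ v : V, ω v v = 0)
    (hnd : ∀ v : V, (∀ u : V, ω v u = 0) → v = 0)
    (ψ : k → ℂ) (hψ : IsAddChar ψ)
    (ℋ : Type) [AddCommGroup ℋ] [Module ℂ ℋ] [FiniteDimensional ℂ ℋ] [Nontrivial ℋ]
    (π : V × k → (ℋ →ₗ[ℂ] ℋ)) (hπ : IsHeisenbergRep ω ψ π)
    (ρ : ↥(Sp ω) →* (ℋ ≃ₗ[ℂ] ℋ))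
    (hρ : ∀ (g : Sp ω) (v : V) (z : k) (x : ℋ),
      ρ g (π (v, z) ((ρ g)⁻¹ x)) = π ((g : V ≃ₗ[k] V) v, z) x)
    (K : ↥(Sp ω) → V → ℂ)
    (hK : ∀ (g : Sp ω) (v : V),
      K g v = (Module.finrank ℂ ℋ : ℂ)⁻¹ *
        LinearMap.trace ℂ ℋ ((ρ g).toLinearMap ∘ₗ π (hInv ω (v, (0 : k))))) :
    ∀ (g₁ g₂ : Sp ω) (v : V),
      ∑ u : V, K g₁ u * K g₂ (v - u) * ψ ((2 : k)⁻¹ * ω u v) = K (g₁ * g₂) v := by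
  intro g₁ g₂ v
  have h2 : (2 : k) ≠ 0 := Ring.two_ne_zero hchar
  have hd : (Module.finrank ℂ ℋ : ℂ) ≠ 0 := by
    exact_mod_cast (Module.finrank_pos (R := ℂ) (M := ℋ)).ne'
  have hm := wk_mul ω ψ π hπ
  have hK' : ∀ (g : Sp ω) (v : V), K g v = (Module.finrank ℂ ℋ : ℂ)⁻¹ *
      LinearMap.trace ℂ ℋ (((ρ g).toLinearMap : Module.End ℂ ℋ) *
        (π (-v, 0) : Module.End ℂ ℋ)) := by
    intro g v
    rw [hK]
    simp only [hInv, halt, neg_zero, mul_zero, add_zero]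
    rfl
  have hρm : ((ρ (g₁ * g₂)).toLinearMap : Module.End ℂ ℋ)
      = ((ρ g₁).toLinearMap : Module.End ℂ ℋ) * ((ρ g₂).toLinearMap : Module.End ℂ ℋ) := by
    rw [map_mul]; rfl
  have hexp := wk_expand ω h2 halt hnd ψ hψ π hπ ((ρ g₁).toLinearMap : Module.End ℂ ℋ)
  have key := congrArg (fun X : Module.End ℂ ℋ => LinearMap.trace ℂ ℋ
    (((ρ g₂).toLinearMap : Module.End ℂ ℋ) * (π (-v, 0) : Module.End ℂ ℋ) * X)) hexp
  simp only [Finset.mul_sum, mul_smul_comm, map_sum, map_smul, smul_eq_mul] at key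
  have hterm : ∀ u : V, K g₁ u * K g₂ (v - u) * ψ ((2 : k)⁻¹ * ω u v)
      = (Module.finrank ℂ ℋ : ℂ)⁻¹ * (Module.finrank ℂ ℋ : ℂ)⁻¹ *
        (LinearMap.trace ℂ ℋ (((ρ g₁).toLinearMap : Module.End ℂ ℋ) *
          (π (-u, 0) : Module.End ℂ ℋ)) *
        LinearMap.trace ℂ ℋ (((ρ g₂).toLinearMap : Module.End ℂ ℋ) *
          (π (-v, 0) : Module.End ℂ ℋ) * (π (u, 0) : Module.End ℂ ℋ))) := by
    intro u
    have e : -v + u = -(v - u) := by abel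
    have e2 : ω (-v) u = ω u v := by
      rw [wk_skew ω halt u v]; simp
    rw [hK', hK', mul_assoc ((ρ g₂).toLinearMap : Module.End ℂ ℋ), hm, e, e2,
      mul_smul_comm, map_smul, smul_eq_mul]
    ring
  rw [Finset.sum_congr rfl (fun u _ => hterm u), ← Finset.mul_sum, key, hK', hρm,
    LinearMap.trace_mul_comm ℂ (_ * _) ((ρ g₁).toLinearMap : Module.End ℂ ℋ), ← mul_assoc ((ρ g₁).toLinearMap : Module.End ℂ ℋ)]
  field_simp
end
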